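/- arXiv:0807.0706 — 2 statements merged into one kernel-verified Lean document; each statement's English description precedes it below -/
import Mathlib

section
/- Let φ : R → S be a flat homomorphism of commutative noetherian rings and let M be an R-module. Then Gfd_S(S ⊗_R M) ≤ Gfd_R(M). If moreover φ is faithfully flat, then Gfd_S(S ⊗_R M) = Gfd_R(M); in particular, in this case Gfd_R(M) is finite if and only if Gfd_S(S ⊗_R M) is finite. -/
/-!
Let `φ : R → S` be a flat homomorphism of commutative noetherian rings and `M` an
`R`-module. Then `Gfd_S(S ⊗_R M) ≤ Gfd_R M`; if moreover `φ` is faithfully flat, then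
`Gfd_S(S ⊗_R M) = Gfd_R M`, and in particular the two dimensions are simultaneously
finite.
-/

universe u

open CategoryTheory TensorProduct

/-- A witness that `G` is a Gorenstein flat `R`-module: an exact complex `F` of flat
`R`-modules (with differentials `d i : F (i+1) →ₗ[R] F i`) such that `E ⊗_R F` is exact
for every injective `R`-module `E`, together with an isomorphism `G ≅ im (F 0 → F (-1))`. -/
structure GorensteinFlatWitness (R : Type u) [CommRing R]
    (G : Type u) [AddCommGroup G] [Module R G] : Type (u + 1) where
  F : ℤ → Type u
  [acg : ∀ i, AddCommGroup (F i)]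
  [mod : ∀ i, Module R (F i)]
  flat : ∀ i, Module.Flat R (F i)
  d : ∀ i : ℤ, F (i + 1) →ₗ[R] F i
  d_comp_d : ∀ i : ℤ, (d i).comp (d (i + 1)) = 0
  exact : ∀ i : ℤ, LinearMap.ker (d i) = LinearMap.range (d (i + 1))
  tensor_exact : ∀ (E : Type u) [AddCommGroup E] [Module R E], Module.Injective R E →
    ∀ i : ℤ, LinearMap.ker (LinearMap.lTensor E (d i)) =
      LinearMap.range (LinearMap.lTensor E (d (i + 1)))
  im_iso : Nonempty (G ≃ₗ[R] LinearMap.range (d (-1)))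

/-- `G` is a Gorenstein flat `R`-module. -/
def IsGorensteinFlat (R : Type u) [CommRing R]
    (G : Type u) [AddCommGroup G] [Module R G] : Prop :=
  Nonempty (GorensteinFlatWitness R G)

/-- A witness for an exact sequence `0 → Gₙ → ⋯ → G₁ → G₀ → M → 0` with each `Gᵢ`
Gorenstein flat (modules beyond index `n` are trivial, which encodes that the
sequence stops at `Gₙ`). -/
structure GfdWitness (R : Type u) [CommRing R]
    (M : Type u) [AddCommGroup M] [Module R M] (n : ℕ) : Type (u + 1) where
  G : ℕ → Type u
  [acg : ∀ i, AddCommGroup (G i)]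
  [mod : ∀ i, Module R (G i)]
  gf : ∀ i ≤ n, IsGorensteinFlat R (G i)
  triv : ∀ i, n < i → Subsingleton (G i)
  π : G 0 →ₗ[R] M
  π_surj : Function.Surjective π
  d : ∀ i : ℕ, G (i + 1) →ₗ[R] G i
  exact_zero : LinearMap.ker π = LinearMap.range (d 0)
  exact : ∀ i : ℕ, LinearMap.ker (d i) = LinearMap.range (d (i + 1))

/-- The Gorenstein flat dimension of a module: the least `n` admitting an exact
sequence `0 → Gₙ → ⋯ → G₀ → M → 0` of Gorenstein flat modules, as an element
of `ℕ∞` (`⊤` if there is no such `n`). -/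
noncomputable def gfd (R : Type u) [CommRing R]
    (M : Type u) [AddCommGroup M] [Module R M] : ℕ∞ :=
  sInf {c : ℕ∞ | ∃ n : ℕ, c = n ∧ Nonempty (GfdWitness R M n)}

namespace GFD

section Basic

variable (R : Type u) [CommRing R]

/-- Existence of a short exact sequence `0 → A → B → C → 0`. -/
def SES (A B C : Type u) [AddCommGroup A] [Module R A] [AddCommGroup B] [Module R B]
    [AddCommGroup C] [Module R C] : Prop :=
  ∃ (f : A →ₗ[R] B) (g : B →ₗ[R] C), Function.Injective f ∧ Function.Exact f g ∧
    Function.Surjective g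

/-- Vanishing of `Tor₁(W, X)`, phrased without resolutions. -/
def V (W X : Type u) [AddCommGroup W] [Module R W] [AddCommGroup X] [Module R X] : Prop :=
  ∀ (A B : Type u) [AddCommGroup A] [Module R A] [AddCommGroup B] [Module R B]
    (f : A →ₗ[R] B) (g : B →ₗ[R] X), Function.Injective f → Function.Exact f g →
    Function.Surjective g → Function.Injective (f.lTensor W)

/-- `0 → K → F → X → 0` with `F` flat, staying exact under tensoring with injectives. -/
def Step (K X : Type u) [AddCommGroup K] [Module R K] [AddCommGroup X] [Module R X] : Prop :=
  ∃ (F : ModuleCat.{u} R) (f : K →ₗ[R] F) (g : F →ₗ[R] X), Module.Flat R F ∧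
    Function.Injective f ∧ Function.Exact f g ∧ Function.Surjective g ∧
    ∀ (E : Type u) [AddCommGroup E] [Module R E], Module.Injective R E →
      Function.Injective (f.lTensor E)

/-- Iterated syzygies of injective modules. -/
inductive Wc : ∀ (W : Type u) [AddCommGroup W] [Module R W], Prop
  | inj (E : Type u) [AddCommGroup E] [Module R E] (h : Module.Injective R E) : Wc E
  | syz (A P W : Type u) [AddCommGroup A] [Module R A] [AddCommGroup P] [Module R P]
      [AddCommGroup W] [Module R W] (f : A →ₗ[R] P) (g : P →ₗ[R] W)
      (hf : Function.Injective f) (hfg : Function.Exact f g) (hg : Function.Surjective g)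
      (hP : Module.Flat R P) (hW : Wc W) : Wc A

/-- `Tor` with injectives vanishes in all positive degrees. -/
def T (X : Type u) [AddCommGroup X] [Module R X] : Prop :=
  ∀ (W : Type u) [AddCommGroup W] [Module R W], Wc R W → V R W X

/-- Gorenstein flat, in terms of syzygies. -/
def GF (X : Type u) [AddCommGroup X] [Module R X] : Prop :=
  ∃ Z : ℤ → ModuleCat.{u} R, (∀ i, Step R (Z (i + 1)) (Z i)) ∧ Nonempty (X ≃ₗ[R] Z 0)

variable {R}
variable {A B C D A' B' C' K F X P W W' Q Y G N L : Type u}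
  [AddCommGroup A] [Module R A] [AddCommGroup B] [Module R B] [AddCommGroup C] [Module R C]
  [AddCommGroup D] [Module R D] [AddCommGroup A'] [Module R A'] [AddCommGroup B'] [Module R B']
  [AddCommGroup C'] [Module R C']
  [AddCommGroup K] [Module R K] [AddCommGroup F] [Module R F] [AddCommGroup X] [Module R X]
  [AddCommGroup P] [Module R P] [AddCommGroup W] [Module R W] [AddCommGroup W'] [Module R W']
  [AddCommGroup Q] [Module R Q] [AddCommGroup Y] [Module R Y] [AddCommGroup G] [Module R G]
  [AddCommGroup N] [Module R N] [AddCommGroup L] [Module R L]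

/-! ### Module theoretic constructions of short exact sequences -/

theorem exists_free (X : Type u) [AddCommGroup X] [Module R X] :
    ∃ (P : ModuleCat.{u} R) (K : ModuleCat.{u} R) (f : K →ₗ[R] P) (g : P →ₗ[R] X),
      Module.Free R P ∧ Function.Injective f ∧ Function.Exact f g ∧ Function.Surjective g := by
  let g : (X →₀ R) →ₗ[R] X := Finsupp.linearCombination R id
  refine ⟨ModuleCat.of R (X →₀ R), ModuleCat.of R (LinearMap.ker g), (LinearMap.ker g).subtype, g,
    inferInstanceAs (Module.Free R (X →₀ R)), Subtype.val_injective,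
    LinearMap.exact_subtype_ker_map g, Finsupp.linearCombination_id_surjective R X⟩

theorem SES.of_injective (f : A →ₗ[R] B) (hf : Function.Injective f) :
    SES R A B (B ⧸ LinearMap.range f) :=
  ⟨f, (LinearMap.range f).mkQ, hf, LinearMap.exact_map_mkQ_range f, Submodule.mkQ_surjective _⟩

/-- Third isomorphism theorem. -/
theorem SES.third (h1 : SES R X Y A) (h2 : SES R Y F C) :
    ∃ Z : ModuleCat.{u} R, SES R X F Z ∧ SES R A Z C := by
  obtain ⟨f, g, hf, hfg, hg⟩ := h1
  obtain ⟨i, p, hi, hip, hp⟩ := h2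
  let j := i ∘ₗ f
  let Z := F ⧸ LinearMap.range j
  have hZ : SES R X F Z := SES.of_injective j (hi.comp hf)
  let q : F →ₗ[R] Z := (LinearMap.range j).mkQ
  have hq : Function.Surjective q := Submodule.mkQ_surjective _
  have hq0 : ∀ x, q x = 0 ↔ ∃ y, i (f y) = x := by
    intro x; exact (Submodule.Quotient.mk_eq_zero _).trans LinearMap.mem_range
  let b : Z →ₗ[R] C := (LinearMap.range j).liftQ p (by
    rintro _ ⟨x, rfl⟩; simpa [j] using hip.apply_apply_eq_zero (f x))
  have hb : ∀ x, b (q x) = p x := fun x => rfl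
  have hker : LinearMap.ker g ≤ LinearMap.ker (q ∘ₗ i) := by
    intro y hy
    obtain ⟨x, rfl⟩ := (hfg y).1 hy
    simp only [LinearMap.mem_ker, LinearMap.comp_apply]
    exact (hq0 _).2 ⟨x, rfl⟩
  let a : A →ₗ[R] Z := (LinearMap.ker g).liftQ (q ∘ₗ i) hker ∘ₗ
    (g.quotKerEquivOfSurjective hg).symm.toLinearMap
  have ha : ∀ y, a (g y) = q (i y) := by
    intro y
    have : (g.quotKerEquivOfSurjective hg).symm (g y) = (LinearMap.ker g).mkQ y := by
      rw [LinearEquiv.symm_apply_eq]; rfl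
    simp [a, this]
  refine ⟨ModuleCat.of R Z, hZ, a, b, ?_, ?_, ?_⟩
  · rw [injective_iff_map_eq_zero]
    intro x hx
    obtain ⟨y, rfl⟩ := hg x
    rw [ha] at hx
    obtain ⟨z, hz⟩ := (hq0 _).1 hx
    rw [← hi hz]
    exact hfg.apply_apply_eq_zero z
  · intro z
    obtain ⟨x, rfl⟩ := hq z
    rw [hb]
    constructor
    · intro hx
      obtain ⟨y, rfl⟩ := (hip x).1 hx
      exact ⟨g y, ha y⟩
    · rintro ⟨w, hw⟩
      obtain ⟨y, rfl⟩ := hg w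
      rw [ha] at hw
      rw [← hb, ← hw, hb]
      exact hip.apply_apply_eq_zero y
  · intro c
    obtain ⟨x, rfl⟩ := hp c
    exact ⟨q x, hb x⟩

/-- Dual of `SES.third`. -/
theorem SES.third'_aux (f : A →ₗ[R] B) (g : B →ₗ[R] X) (hf : Function.Injective f)
    (hfg : Function.Exact f g) (hg : Function.Surjective g)
    (i : Y →ₗ[R] X) (p : X →ₗ[R] G) (hi : Function.Injective i)
    (hip : Function.Exact i p) (hp : Function.Surjective p) :
    ∃ (Z : ModuleCat.{u} R) (z : Z →ₗ[R] B) (a : A →ₗ[R] Z) (y : Z →ₗ[R] Y),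
      z ∘ₗ a = f ∧ (Function.Injective z ∧ Function.Exact z (p ∘ₗ g) ∧
        Function.Surjective (p ∘ₗ g)) ∧
      (Function.Injective a ∧ Function.Exact a y ∧ Function.Surjective y) := by
  let Z := LinearMap.ker (p ∘ₗ g)
  let e : Y ≃ₗ[R] LinearMap.range i := LinearEquiv.ofInjective i hi
  let a : A →ₗ[R] Z := f.codRestrict _ (by
    intro c
    exact (congrArg p (hfg.apply_apply_eq_zero c)).trans (map_zero p))
  let g' : Z →ₗ[R] LinearMap.range i := (g ∘ₗ Z.subtype).codRestrict _ (by
    rintro ⟨c, hc⟩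
    exact (hip _).1 hc)
  have hg' : ∀ z : Z, (g' z : X) = g z := fun z => rfl
  have he : ∀ y : Y, ((e y : LinearMap.range i) : X) = i y := fun y => rfl
  refine ⟨ModuleCat.of R Z, Z.subtype, a, e.symm.toLinearMap ∘ₗ g', rfl,
    ⟨Subtype.val_injective, LinearMap.exact_subtype_ker_map _, hp.comp hg⟩, ?_, ?_, ?_⟩
  · intro x y hxy
    exact hf (congrArg Subtype.val hxy)
  · intro z
    have : (e.symm.toLinearMap ∘ₗ g') z = 0 ↔ g (z : B) = 0 := by
      simp only [LinearMap.comp_apply, LinearEquiv.coe_coe, map_eq_zero_iff _ e.symm.injective,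
        ← hg']
      exact Subtype.ext_iff
    rw [this, hfg]
    constructor
    · rintro ⟨y, hy⟩; exact ⟨y, Subtype.ext hy⟩
    · rintro ⟨y, hy⟩; exact ⟨y, congrArg Subtype.val hy⟩
  · intro y
    obtain ⟨b, hb⟩ := hg (i y)
    refine ⟨⟨b, ?_⟩, ?_⟩
    · exact (congrArg p hb).trans (hip.apply_apply_eq_zero y)
    · simp only [LinearMap.comp_apply, LinearEquiv.coe_coe, LinearEquiv.symm_apply_eq]
      exact Subtype.ext hb

/-- Dual of `SES.third`. -/
theorem SES.third' (h1 : SES R A B X) (h2 : SES R Y X G) :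
    ∃ Z : ModuleCat.{u} R, SES R Z B G ∧ SES R A Z Y := by
  obtain ⟨f, g, hf, hfg, hg⟩ := h1
  obtain ⟨i, p, hi, hip, hp⟩ := h2
  obtain ⟨Z, z, a, y, -, h1, h2⟩ := SES.third'_aux f g hf hfg hg i p hi hip hp
  exact ⟨Z, ⟨z, _, h1⟩, ⟨a, y, h2⟩⟩

/-- Pushouts. -/
theorem SES.pushout (h1 : SES R A X B) (h2 : SES R A F C) :
    ∃ Z : ModuleCat.{u} R, SES R F Z B ∧ SES R X Z C := by
  obtain ⟨f, g, hf, hfg, hg⟩ := h1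
  obtain ⟨i, p, hi, hip, hp⟩ := h2
  let j : A →ₗ[R] F × X := i.prod (-f)
  let Z := (F × X) ⧸ LinearMap.range j
  let q : (F × X) →ₗ[R] Z := (LinearMap.range j).mkQ
  have hq : Function.Surjective q := Submodule.mkQ_surjective _
  have hq0 : ∀ x y, q (x, y) = 0 ↔ ∃ a, i a = x ∧ - f a = y := by
    intro x y
    refine ((Submodule.Quotient.mk_eq_zero _).trans LinearMap.mem_range).trans ?_
    simp [j]
  let b : Z →ₗ[R] B := (LinearMap.range j).liftQ (g ∘ₗ LinearMap.snd R F X) (by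
    rintro _ ⟨x, rfl⟩; simp [j, hfg.apply_apply_eq_zero x])
  have hb : ∀ x y, b (q (x, y)) = g y := fun x y => rfl
  let c : Z →ₗ[R] C := (LinearMap.range j).liftQ (p ∘ₗ LinearMap.fst R F X) (by
    rintro _ ⟨x, rfl⟩; simp [j, hip.apply_apply_eq_zero x])
  have hc : ∀ x y, c (q (x, y)) = p x := fun x y => rfl
  refine ⟨ModuleCat.of R Z, ⟨q ∘ₗ LinearMap.inl R F X, b, ?_, ?_, ?_⟩,
    ⟨q ∘ₗ LinearMap.inr R F X, c, ?_, ?_, ?_⟩⟩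
  · rw [injective_iff_map_eq_zero]
    intro x hx
    obtain ⟨a, rfl, ha⟩ := (hq0 _ _).1 hx
    have ha : -f a = 0 := ha
    rw [neg_eq_zero, map_eq_zero_iff _ hf] at ha
    simp [ha]
  · intro z
    obtain ⟨⟨x, y⟩, rfl⟩ := hq z
    rw [hb]
    constructor
    · intro hx
      obtain ⟨a, rfl⟩ := (hfg y).1 hx
      refine ⟨x + i a, ?_⟩
      simp only [LinearMap.comp_apply, LinearMap.inl_apply]
      rw [← sub_eq_zero, ← map_sub]
      exact (hq0 _ _).2 ⟨a, by simp, by simp⟩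
    · rintro ⟨w, hw⟩
      rw [← hb x y, ← hw]
      simp [hb]
  · intro y
    obtain ⟨x, rfl⟩ := hg y
    exact ⟨q (0, x), hb _ _⟩
  · rw [injective_iff_map_eq_zero]
    intro x hx
    obtain ⟨a, ha, rfl⟩ := (hq0 _ _).1 hx
    have ha : i a = 0 := ha
    rw [map_eq_zero_iff _ hi] at ha
    simp [ha]
  · intro z
    obtain ⟨⟨x, y⟩, rfl⟩ := hq z
    rw [hc]
    constructor
    · intro hx
      obtain ⟨a, rfl⟩ := (hip x).1 hx
      refine ⟨y + f a, ?_⟩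
      simp only [LinearMap.comp_apply, LinearMap.inr_apply]
      rw [← sub_eq_zero, ← map_sub]
      exact (hq0 _ _).2 ⟨-a, by simp, by simp⟩
    · rintro ⟨w, hw⟩
      rw [← hc x y, ← hw]
      simp [hc]
  · intro y
    obtain ⟨x, rfl⟩ := hp y
    exact ⟨q (x, 0), hc _ _⟩

theorem SES.prod_right (P : Type u) [AddCommGroup P] [Module R P] (h : SES R A B C) :
    SES R A (B × P) (C × P) := by
  obtain ⟨f, g, hf, hfg, hg⟩ := h
  refine ⟨LinearMap.inl R B P ∘ₗ f, g.prodMap LinearMap.id, LinearMap.inl_injective.comp hf, ?_, ?_⟩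
  · rintro ⟨x, y⟩
    simp only [LinearMap.prodMap_apply, Prod.mk_eq_zero, hfg x]
    constructor
    · rintro ⟨⟨a, rfl⟩, h⟩
      exact ⟨a, by simpa using h.symm⟩
    · rintro ⟨a, ha⟩
      simp only [LinearMap.comp_apply, LinearMap.inl_apply, Prod.mk.injEq] at ha
      exact ⟨⟨a, ha.1⟩, ha.2.symm⟩
  · exact hg.prodMap Function.surjective_id

theorem SES.prod_left (P : Type u) [AddCommGroup P] [Module R P] (h : SES R A B C) :
    SES R (P × A) (P × B) C := by
  obtain ⟨f, g, hf, hfg, hg⟩ := h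
  refine ⟨LinearMap.id.prodMap f, g ∘ₗ LinearMap.snd R P B,
    Function.injective_id.prodMap hf, ?_, hg.comp LinearMap.snd_surjective⟩
  rintro ⟨x, y⟩
  simp only [LinearMap.comp_apply, LinearMap.snd_apply, hfg y]
  constructor
  · rintro ⟨a, rfl⟩
    exact ⟨(x, a), by simp⟩
  · rintro ⟨⟨a, b⟩, ha⟩
    simp only [LinearMap.prodMap_apply, Prod.mk.injEq] at ha
    exact ⟨b, ha.2⟩

theorem SES.prod (A B : Type u) [AddCommGroup A] [Module R A] [AddCommGroup B] [Module R B] :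
    SES R A (A × B) B :=
  ⟨LinearMap.inl R A B, LinearMap.snd R A B, LinearMap.inl_injective, by
    rintro ⟨x, y⟩
    constructor
    · intro h
      exact ⟨x, by simpa using h.symm⟩
    · rintro ⟨w, hw⟩
      simp only [LinearMap.inl_apply, Prod.mk.injEq] at hw
      exact hw.2.symm, LinearMap.snd_surjective⟩

/-- Schanuel. -/
theorem SES.schanuel [Module.Projective R P] (h1 : SES R K G X) (h2 : SES R A P X) :
    SES R A (K × P) G := by
  obtain ⟨f, g, hf, hfg, hg⟩ := h1
  obtain ⟨i, p, hi, hip, hp⟩ := h2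
  obtain ⟨s, hs⟩ := Module.projective_lifting_property g p hg
  have hs' : ∀ x, g (s x) = p x := fun x => LinearMap.congr_fun hs x
  let e : K ≃ₗ[R] LinearMap.range f := LinearEquiv.ofInjective f hf
  let t : A →ₗ[R] LinearMap.range f := (s ∘ₗ i).codRestrict _ (by
    intro a
    exact (hfg _).1 (by simp [hs', hip.apply_apply_eq_zero a]))
  let r : A →ₗ[R] K := e.symm.toLinearMap ∘ₗ t
  have hr : ∀ a, f (r a) = s (i a) := by
    intro a
    have : e (r a) = t a := by simp [r]
    exact congrArg Subtype.val this
  refine ⟨(-r).prod i, f.coprod s, ?_, ?_, ?_⟩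
  · intro x y hxy
    exact hi (congrArg Prod.snd hxy)
  · rintro ⟨k, x⟩
    simp only [LinearMap.coprod_apply]
    constructor
    · intro h
      have h2 := congrArg g h
      simp only [map_add, hfg.apply_apply_eq_zero, hs', zero_add, map_zero] at h2
      obtain ⟨a, rfl⟩ := (hip x).1 h2
      refine ⟨a, ?_⟩
      simp only [LinearMap.prod_apply, Function.prod_apply, LinearMap.neg_apply, Prod.mk.injEq, and_true]
      apply hf
      rw [map_neg, hr]
      exact (eq_neg_of_add_eq_zero_left h).symm
    · rintro ⟨a, ha⟩
      simp only [LinearMap.prod_apply, Function.prod_apply, LinearMap.neg_apply, Prod.mk.injEq] at ha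
      rw [← ha.1, ← ha.2, map_neg, hr]
      simp
  · intro y
    obtain ⟨x, hx⟩ := hp (g y)
    obtain ⟨k, hk⟩ := (hfg (y - s x)).1 (by simp [hs', hx])
    exact ⟨(k, x), by simp [hk]⟩

/-- If `L → L₁` extends along `L → X`, the pushout is a product. -/
theorem SES.of_extension (i : A →ₗ[R] X) (p : X →ₗ[R] C) 
    (hip : Function.Exact i p) (hp : Function.Surjective p) (u : X →ₗ[R] L)
    (hu : Function.Injective (u ∘ₗ i)) :
    SES R X (L × C) (L ⧸ LinearMap.range (u ∘ₗ i)) := by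
  let q : L →ₗ[R] L ⧸ LinearMap.range (u ∘ₗ i) := (LinearMap.range (u ∘ₗ i)).mkQ
  have hq : Function.Surjective q := Submodule.mkQ_surjective _
  have hq0 : ∀ x, q x = 0 ↔ ∃ y, u (i y) = x := by
    intro x; exact (Submodule.Quotient.mk_eq_zero _).trans LinearMap.mem_range
  have hker : LinearMap.ker p ≤ LinearMap.ker (q ∘ₗ u) := by
    intro y hy
    obtain ⟨x, rfl⟩ := (hip y).1 hy
    simp only [LinearMap.mem_ker, LinearMap.comp_apply]
    exact (hq0 _).2 ⟨x, rfl⟩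
  let a : C →ₗ[R] L ⧸ LinearMap.range (u ∘ₗ i) := (LinearMap.ker p).liftQ (q ∘ₗ u) hker ∘ₗ
    (p.quotKerEquivOfSurjective hp).symm.toLinearMap
  have ha : ∀ y, a (p y) = q (u y) := by
    intro y
    have : (p.quotKerEquivOfSurjective hp).symm (p y) = (LinearMap.ker p).mkQ y := by
      rw [LinearEquiv.symm_apply_eq]; rfl
    simp [a, this]
  refine ⟨u.prod p, q.coprod (-a), ?_, ?_, ?_⟩
  · rw [injective_iff_map_eq_zero]
    intro x hx
    simp only [LinearMap.prod_apply, Function.prod_apply, Prod.mk_eq_zero] at hx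
    obtain ⟨y, rfl⟩ := (hip x).1 hx.2
    rw [(map_eq_zero_iff _ hu).1 hx.1, map_zero]
  · rintro ⟨l, c⟩
    obtain ⟨x, rfl⟩ := hp c
    simp only [LinearMap.coprod_apply, LinearMap.neg_apply, ha]
    constructor
    · intro h
      rw [← sub_eq_add_neg, ← map_sub] at h
      obtain ⟨y, hy⟩ := (hq0 _).1 h
      exact ⟨x + i y, by simp [hy, hip.apply_apply_eq_zero y]⟩
    · rintro ⟨y, hy⟩
      simp only [LinearMap.prod_apply, Function.prod_apply, Prod.mk.injEq] at hy
      rw [← hy.1, ← ha, ← ha, hy.2, add_neg_cancel]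
  · intro y
    obtain ⟨x, rfl⟩ := hq y
    exact ⟨(x, 0), by simp⟩

/-- The sequence on cokernels used in the descent argument. -/
theorem SES.coker (n : N →ₗ[R] B) (q : B →ₗ[R] Q) (hnq : Function.Exact n q)
    (hq : Function.Surjective q) (l : L →ₗ[R] B) (m : B →ₗ[R] F) (hl : Function.Injective l)
    (hlm : Function.Exact l m) (hm : Function.Surjective m) (hj : Function.Injective (m ∘ₗ n))
    (p : F →ₗ[R] C) (hjp : Function.Exact (m ∘ₗ n) p) (hp : Function.Surjective p) :
    SES R L Q C := by
  have hker : LinearMap.ker q ≤ LinearMap.ker (p ∘ₗ m) := by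
    intro y hy
    obtain ⟨x, rfl⟩ := (hnq y).1 hy
    exact hjp.apply_apply_eq_zero x
  let a : Q →ₗ[R] C := (LinearMap.ker q).liftQ (p ∘ₗ m) hker ∘ₗ
    (q.quotKerEquivOfSurjective hq).symm.toLinearMap
  have ha : ∀ y, a (q y) = p (m y) := by
    intro y
    have : (q.quotKerEquivOfSurjective hq).symm (q y) = (LinearMap.ker q).mkQ y := by
      rw [LinearEquiv.symm_apply_eq]; rfl
    simp [a, this]
  refine ⟨q ∘ₗ l, a, ?_, ?_, ?_⟩
  · rw [injective_iff_map_eq_zero]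
    intro x hx
    obtain ⟨y, hy⟩ := (hnq _).1 hx
    have : (m ∘ₗ n) y = 0 := by
      simp [hy, hlm.apply_apply_eq_zero x]
    rw [map_eq_zero_iff _ hj] at this
    rw [this, map_zero] at hy
    exact (map_eq_zero_iff _ hl).1 hy.symm
  · intro z
    obtain ⟨x, rfl⟩ := hq z
    rw [ha]
    constructor
    · intro h
      obtain ⟨y, hy⟩ := (hjp _).1 h
      obtain ⟨w, hw⟩ := (hlm (x - n y)).1 (by
        rw [map_sub, ← hy]; simp)
      exact ⟨w, by simp [hw, hnq.apply_apply_eq_zero y]⟩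
    · rintro ⟨w, hw⟩
      rw [← ha, ← hw]
      simp [ha, hlm.apply_apply_eq_zero w]
  · intro y
    obtain ⟨x, rfl⟩ := hp y
    obtain ⟨b, rfl⟩ := hm x
    exact ⟨q b, ha b⟩

end Basic
section TorGF

variable {R : Type u} [CommRing R]
variable {A B C K F X P W W' Y G L : Type u}
  [AddCommGroup A] [Module R A] [AddCommGroup B] [Module R B] [AddCommGroup C] [Module R C]
  [AddCommGroup K] [Module R K] [AddCommGroup F] [Module R F] [AddCommGroup X] [Module R X]
  [AddCommGroup P] [Module R P] [AddCommGroup W] [Module R W] [AddCommGroup W'] [Module R W']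
  [AddCommGroup Y] [Module R Y] [AddCommGroup G] [Module R G]
  [AddCommGroup L] [Module R L]

/-! ### Vanishing of Tor -/

theorem lr_comm (a : W' →ₗ[R] P) (f : K →ₗ[R] F) (x : W' ⊗[R] K) :
    a.rTensor F (f.lTensor W' x) = f.lTensor P (a.rTensor K x) := by
  rw [← LinearMap.comp_apply, ← LinearMap.comp_apply, LinearMap.rTensor_comp_lTensor,
    LinearMap.lTensor_comp_rTensor]

theorem flip1 (a : W' →ₗ[R] P) (b : P →ₗ[R] W) (f : K →ₗ[R] F) (g : F →ₗ[R] X)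
    (hab : Function.Exact a b) (hb : Function.Surjective b)
    (hfg : Function.Exact f g) (hg : Function.Surjective g)
    (h1 : Function.Injective (a.rTensor F)) (h2 : Function.Injective (f.lTensor W)) :
    Function.Injective (a.rTensor X) := by
  rw [injective_iff_map_eq_zero]
  intro w hw
  obtain ⟨y, rfl⟩ := LinearMap.lTensor_surjective W' hg w
  rw [lr_comm] at hw
  obtain ⟨z, hz⟩ := (lTensor_exact P hfg hg _).1 hw
  have h3 : f.lTensor W (b.rTensor K z) = 0 := by
    rw [← lr_comm, hz]
    exact (rTensor_exact F hab hb).apply_apply_eq_zero y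
  rw [map_eq_zero_iff _ h2] at h3
  obtain ⟨v, rfl⟩ := (rTensor_exact K hab hb _).1 h3
  rw [← lr_comm] at hz
  rw [← h1 hz]
  exact (lTensor_exact W' hfg hg).apply_apply_eq_zero v

theorem flip2 (a : W' →ₗ[R] P) (b : P →ₗ[R] W) (f : K →ₗ[R] F) (g : F →ₗ[R] X)
    (hab : Function.Exact a b) (hb : Function.Surjective b)
    (hfg : Function.Exact f g) (hg : Function.Surjective g)
    (h1 : Function.Injective (f.lTensor P)) (h2 : Function.Injective (a.rTensor X)) :
    Function.Injective (f.lTensor W) := by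
  rw [injective_iff_map_eq_zero]
  intro w hw
  obtain ⟨y, rfl⟩ := LinearMap.rTensor_surjective K hb w
  rw [← lr_comm] at hw
  obtain ⟨z, hz⟩ := (rTensor_exact F hab hb _).1 hw
  have h3 : a.rTensor X (g.lTensor W' z) = 0 := by
    rw [lr_comm, hz]
    exact (lTensor_exact P hfg hg).apply_apply_eq_zero y
  rw [map_eq_zero_iff _ h2] at h3
  obtain ⟨v, rfl⟩ := (lTensor_exact W' hfg hg _).1 h3
  rw [lr_comm] at hz
  rw [← h1 hz]
  exact (rTensor_exact K hab hb).apply_apply_eq_zero v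

theorem V.of_flatP [Module.Flat R P] (a : W' →ₗ[R] P) (b : P →ₗ[R] W)
    (hab : Function.Exact a b) (hb : Function.Surjective b)
    (h : Function.Injective (a.rTensor X)) : V R W X := by
  intro A B _ _ _ _ f g hf hfg hg
  exact flip2 a b f g hab hb hfg hg (Module.Flat.lTensor_preserves_injective_linearMap f hf) h

theorem V.of_flat [Module.Flat R X] : V R W X := by
  obtain ⟨P, K, a, b, hP, ha, hab, hb⟩ := exists_free (R := R) W
  exact V.of_flatP a b hab hb (Module.Flat.rTensor_preserves_injective_linearMap a ha)

/-- Tor vanishing gives injectivity on the other side. -/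
theorem V.rTensor (h : V R W X) (a : W' →ₗ[R] P) (b : P →ₗ[R] W) (ha : Function.Injective a)
    (hab : Function.Exact a b) (hb : Function.Surjective b) :
    Function.Injective (a.rTensor X) := by
  obtain ⟨F, K, f, g, hF, hf, hfg, hg⟩ := exists_free (R := R) X
  exact flip1 a b f g hab hb hfg hg (Module.Flat.rTensor_preserves_injective_linearMap a ha)
    (h _ _ f g hf hfg hg)

/-- A single flat presentation suffices. -/
theorem V.of_flatF [Module.Flat R F] (f : K →ₗ[R] F) (g : F →ₗ[R] X)
    (hfg : Function.Exact f g) (hg : Function.Surjective g)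
    (h : Function.Injective (f.lTensor W)) : V R W X := by
  obtain ⟨P, K, a, b, hP, ha, hab, hb⟩ := exists_free (R := R) W
  exact V.of_flatP a b hab hb (flip1 a b f g hab hb hfg hg
    (Module.Flat.rTensor_preserves_injective_linearMap a ha) h)

theorem V.congr (e : X ≃ₗ[R] Y) (h : V R W X) : V R W Y := by
  intro A B _ _ _ _ f g hf hfg hg
  refine h A B f (e.symm.toLinearMap ∘ₗ g) hf ?_ (e.symm.surjective.comp hg)
  intro x
  rw [← hfg x]
  simp

theorem V.ext (h : SES R A X B) (hA : V R W A) (hB : V R W B) : V R W X := by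
  obtain ⟨i, p, hi, hip, hp⟩ := h
  intro A' B' _ _ _ _ f g hf hfg hg
  obtain ⟨Z, z, a, y, hza, ⟨hz1, hz2, hz3⟩, ⟨ha1, ha2, ha3⟩⟩ :=
    SES.third'_aux f g hf hfg hg i p hi hip hp
  rw [← hza, LinearMap.lTensor_comp]
  exact (hB _ _ z _ hz1 hz2 hz3).comp (hA _ _ a y ha1 ha2 ha3)

theorem T.congr (e : X ≃ₗ[R] Y) (h : T R X) : T R Y := fun W _ _ hW => (h W hW).congr e

theorem T.of_flat [Module.Flat R X] : T R X := fun _ _ _ _ => V.of_flat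

theorem T.ext (h : SES R A X B) (hA : T R A) (hB : T R B) : T R X :=
  fun W _ _ hW => V.ext h (hA W hW) (hB W hW)

theorem T.ker (h : SES R A X B) (hX : T R X) (hB : T R B) : T R A := by
  intro W _ _ hW
  obtain ⟨i, p, hi, hip, hp⟩ := h
  obtain ⟨P, W', a, b, hP, ha, hab, hb⟩ := exists_free (R := R) W
  have hW' : Wc R W' := Wc.syz W' P W a b ha hab hb inferInstance hW
  have h1 : Function.Injective (i.lTensor W') := hB W' hW' _ _ i p hi hip hp
  have h2 : Function.Injective (a.rTensor X) := (hX W hW).rTensor a b ha hab hb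
  refine V.of_flatP a b hab hb ?_
  have h3 : Function.Injective (i.lTensor P ∘ₗ a.rTensor A) := by
    have : i.lTensor P ∘ₗ a.rTensor A = a.rTensor X ∘ₗ i.lTensor W' := by
      rw [LinearMap.rTensor_comp_lTensor, LinearMap.lTensor_comp_rTensor]
    rw [this]
    exact h2.comp h1
  exact Function.Injective.of_comp (f := i.lTensor P) h3

theorem T.of_class (c : ModuleCat.{u} R → Prop)
    (hV : ∀ X, c X → ∀ (E : Type u) [AddCommGroup E] [Module R E], Module.Injective R E → V R E X)
    (hs : ∀ X, c X → ∃ (K F : ModuleCat.{u} R) (f : K →ₗ[R] F) (g : F →ₗ[R] X), c K ∧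
      Module.Flat R F ∧ Function.Injective f ∧ Function.Exact f g ∧ Function.Surjective g)
    (X : ModuleCat.{u} R) (hX : c X) : T R X := by
  intro W _ _ hW
  induction hW generalizing X with
  | inj E h => exact hV X hX E h
  | syz A P W a b ha hab hb hP hW ih =>
    obtain ⟨K, F, f, g, hK, hF, hf, hfg, hg⟩ := hs X hX
    refine V.of_flatF f g hfg hg ?_
    have h1 := (ih K hK).rTensor a b ha hab hb
    have h2 := Module.Flat.lTensor_preserves_injective_linearMap (M := P) f hf
    have h3 : Function.Injective (a.rTensor F ∘ₗ f.lTensor A) := by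
      have : a.rTensor F ∘ₗ f.lTensor A = f.lTensor P ∘ₗ a.rTensor K := by
        rw [LinearMap.rTensor_comp_lTensor, LinearMap.lTensor_comp_rTensor]
      rw [this]
      exact h2.comp h1
    exact Function.Injective.of_comp (f := a.rTensor F) h3

/-! ### Gorenstein flat modules -/

theorem Step.congr_right (e : X ≃ₗ[R] Y) (h : Step R K X) : Step R K Y := by
  obtain ⟨F, f, g, hF, hf, hfg, hg, hE⟩ := h
  refine ⟨F, f, e.toLinearMap ∘ₗ g, hF, hf, ?_, e.surjective.comp hg, hE⟩
  intro x
  rw [← hfg x]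
  simp

theorem Step.congr_left (e : K ≃ₗ[R] L) (h : Step R K X) : Step R L X := by
  obtain ⟨F, f, g, hF, hf, hfg, hg, hE⟩ := h
  refine ⟨F, f ∘ₗ e.symm.toLinearMap, g, hF, hf.comp e.symm.injective, ?_, hg, ?_⟩
  · intro x
    rw [hfg x]
    constructor
    · rintro ⟨y, rfl⟩; exact ⟨e y, by simp⟩
    · rintro ⟨y, rfl⟩; exact ⟨e.symm y, by simp⟩
  · intro E _ _ h
    rw [LinearMap.lTensor_comp]
    exact (hE E h).comp (e.symm.lTensor E).injective

theorem Step.of_V (h : SES R K F X) (hF : Module.Flat R F)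
    (hV : ∀ (E : Type u) [AddCommGroup E] [Module R E], Module.Injective R E → V R E X) :
    Step R K X := by
  obtain ⟨f, g, hf, hfg, hg⟩ := h
  exact ⟨ModuleCat.of R F, f, g, hF, hf, hfg, hg, fun E _ _ hE => hV E hE _ _ f g hf hfg hg⟩

theorem Step.of_T (h : SES R K F X) (hF : Module.Flat R F) (hT : T R X) : Step R K X :=
  Step.of_V h hF fun E _ _ hE => hT E (Wc.inj E hE)

theorem Step.V (h : Step R K X) (E : Type u) [AddCommGroup E] [Module R E]
    (hE : Module.Injective R E) : V R E X := by
  obtain ⟨F, f, g, hF, hf, hfg, hg, h⟩ := h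
  exact V.of_flatF f g hfg hg (h E hE)

theorem GF.congr (e : X ≃ₗ[R] Y) (h : GF R X) : GF R Y := by
  obtain ⟨Z, hZ, ⟨i⟩⟩ := h
  exact ⟨Z, hZ, ⟨e.symm.trans i⟩⟩

theorem GF.left (h : GF R X) : ∃ K : ModuleCat.{u} R, GF R K ∧ Step R K X := by
  obtain ⟨Z, hZ, ⟨i⟩⟩ := h
  refine ⟨Z (0 + 1), ⟨fun i => Z (i + 1), fun i => hZ (i + 1), ⟨LinearEquiv.refl _ _⟩⟩, ?_⟩
  exact (hZ 0).congr_right i.symm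

theorem GF.right (h : GF R X) : ∃ K : ModuleCat.{u} R, GF R K ∧ Step R X K := by
  obtain ⟨Z, hZ, ⟨i⟩⟩ := h
  refine ⟨Z (0 - 1), ⟨fun i => Z (i - 1), fun i => ?_, ⟨LinearEquiv.refl _ _⟩⟩, ?_⟩
  · have := hZ (i - 1)
    have e : i - 1 + 1 = i + 1 - 1 := by ring
    rw [e] at this
    exact this
  · have := hZ (0 - 1)
    have e : (0 : ℤ) - 1 + 1 = 0 := by ring
    rw [e] at this
    exact this.congr_left i.symm

theorem GF.T (h : GF R X) : T R X := by
  refine T.of_class (fun Y => GF R Y) ?_ ?_ (ModuleCat.of R X) h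
  · intro X hX E _ _ hE
    obtain ⟨K, hK, h⟩ := hX.left
    exact h.V E hE
  · intro X hX
    obtain ⟨K, hK, F, f, g, hF, hf, hfg, hg, h⟩ := hX.left
    exact ⟨K, F, f, g, hK, hF, hf, hfg, hg⟩

theorem exists_seq {α : Type*} (p : α → Prop) (r : α → α → Prop)
    (h : ∀ x, p x → ∃ y, p y ∧ r x y) (x : α) (hx : p x) :
    ∃ s : ℕ → α, s 0 = x ∧ ∀ n, r (s n) (s (n + 1)) := by
  choose! f hf using h
  refine ⟨fun n => f^[n] x, rfl, fun n => ?_⟩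
  have : ∀ n, p (f^[n] x) := by
    intro n
    induction n with
    | zero => exact hx
    | succ n ih => rw [Function.iterate_succ_apply']; exact (hf _ ih).1
  show r (f^[n] x) (f^[n+1] x)
  rw [Function.iterate_succ_apply']
  exact (hf _ (this n)).2

theorem GF.intro (c : ModuleCat.{u} R → Prop) (hT : ∀ X, c X → GFD.T R X)
    (hr : ∀ X, c X → ∃ Y : ModuleCat.{u} R, c Y ∧ Step R X Y) (X : ModuleCat.{u} R) (hX : c X) :
    GF R X := by
  obtain ⟨s, hs0, hs⟩ := exists_seq c (fun X Y => Step R X Y) hr X hX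
  obtain ⟨t, ht0, ht⟩ := exists_seq (fun X : ModuleCat.{u} R => GFD.T R X)
    (fun X Y => Step R Y X) (by
      intro X hX
      obtain ⟨P, K, f, g, hP, hf, hfg, hg⟩ := exists_free (R := R) X
      exact ⟨K, T.ker ⟨f, g, hf, hfg, hg⟩ T.of_flat hX,
        Step.of_T ⟨f, g, hf, hfg, hg⟩ inferInstance hX⟩) X (hT X hX)
  let Z : ℤ → ModuleCat.{u} R := fun i => match i with
    | Int.ofNat n => t n
    | Int.negSucc n => s (n + 1)
  refine ⟨Z, ?_, ⟨?_⟩⟩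
  · intro i
    match i with
    | Int.ofNat n => exact ht n
    | Int.negSucc 0 =>
      have := hs 0
      rw [hs0, ← ht0] at this
      exact this
    | Int.negSucc (n + 1) => exact hs (n + 1)
  · have : Z 0 = X := ht0
    rw [this]

theorem GF.of_step (hT : GFD.T R X) (h : SES R X F C) (hF : Module.Flat R F) (hC : GF R C) :
    GF R X := by
  refine GF.intro (fun Y => GFD.T R Y ∧ ∃ C : ModuleCat.{u} R, GF R C ∧ Step R Y C) ?_ ?_
    (ModuleCat.of R X) ?_
  · intro Y hY; exact hY.1
  · rintro Y ⟨hY, C, hC, hYC⟩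
    exact ⟨C, ⟨hC.T, hC.right⟩, hYC⟩
  · exact ⟨hT, ModuleCat.of R C, hC, Step.of_T h hF hC.T⟩

theorem GF.of_flat (hX : Module.Flat R X) : GF R X := by
  refine GF.intro (fun Y => Module.Flat R Y) (fun Y hY => T.of_flat) ?_ (ModuleCat.of R X) hX
  intro Y hY
  have h0 : Module.Flat R PUnit.{u+1} := inferInstance
  refine ⟨ModuleCat.of R PUnit.{u+1}, h0, Step.of_T (F := Y) ⟨LinearMap.id, 0,
    Function.injective_id, ?_, ?_⟩ hY (@T.of_flat R _ PUnit.{u+1} _ _ h0)⟩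
  · intro x; simp
  · intro x; exact ⟨0, rfl⟩

end TorGF
section Noeth

variable {R : Type u} [CommRing R]
variable {A B C K F X P W W' Y G L E : Type u}
  [AddCommGroup A] [Module R A] [AddCommGroup B] [Module R B] [AddCommGroup C] [Module R C]
  [AddCommGroup K] [Module R K] [AddCommGroup F] [Module R F] [AddCommGroup X] [Module R X]
  [AddCommGroup P] [Module R P] [AddCommGroup W] [Module R W] [AddCommGroup W'] [Module R W']
  [AddCommGroup Y] [Module R Y] [AddCommGroup G] [Module R G]
  [AddCommGroup L] [Module R L] [AddCommGroup E] [Module R E]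

/-! ### Character modules over noetherian rings -/

theorem inj_factor (hE : Module.Injective R E) (φ : A →ₗ[R] B) (g : A →ₗ[R] E)
    (h : LinearMap.ker φ ≤ LinearMap.ker g) : ∃ k : B →ₗ[R] E, ∀ a, k (φ a) = g a := by
  obtain ⟨k, hk⟩ := hE.out ((LinearMap.ker φ).liftQ φ le_rfl)
    (LinearMap.ker_eq_bot.1 (Submodule.ker_liftQ_eq_bot _ _ _ le_rfl))
    ((LinearMap.ker φ).liftQ g h)
  exact ⟨k, fun a => hk ((LinearMap.ker φ).mkQ a)⟩

theorem char_factor (φ : A →ₗ[R] B) (g : CharacterModule A)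
    (h : ∀ a, φ a = 0 → g a = 0) : ∃ k : CharacterModule B, ∀ a, k (φ a) = g a := by
  let g' : CharacterModule (A ⧸ LinearMap.ker φ) :=
    QuotientAddGroup.lift (LinearMap.ker φ).toAddSubgroup g (fun a ha => h a ha)
  obtain ⟨k, hk⟩ := CharacterModule.dual_surjective_of_injective
    ((LinearMap.ker φ).liftQ φ le_rfl)
    (LinearMap.ker_eq_bot.1 (Submodule.ker_liftQ_eq_bot _ _ _ le_rfl)) g'
  exact ⟨k, fun a => DFunLike.congr_fun hk ((LinearMap.ker φ).mkQ a)⟩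

theorem char_flat [IsNoetherianRing R] (hE : Module.Injective R E) :
    Module.Flat R (CharacterModule E) := by
  refine Module.Flat.of_forall_isTrivialRelation ?_
  intro l f x hfx
  let φ : (Fin l → R) →ₗ[R] R := Fintype.linearCombination R f
  obtain ⟨k, r, hr⟩ := Submodule.fg_iff_exists_fin_generating_family.1
    (IsNoetherian.noetherian (LinearMap.ker φ))
  let ρ : (Fin l → E) →ₗ[R] (Fin k → E) :=
    LinearMap.pi fun j => Fintype.linearCombination R (fun i => (r j i)) ∘ₗ LinearMap.id |> fun _ =>
      ∑ i, r j i • LinearMap.proj i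
  have hρ : ∀ e j, ρ e j = ∑ i, r j i • e i := by
    intro e j; simp [ρ]
  let Φ : CharacterModule (Fin l → E) := ∑ i, CharacterModule.dual (LinearMap.proj (R := R) i) (x i)
  have hsum : ∀ {M : Type u} [AddCommGroup M] (n : ℕ) (c : Fin n → CharacterModule M) (m : M),
      (∑ i, c i) m = ∑ i, c i m := by
    intro M _ n c m
    exact map_sum ({ toFun := fun c => c m, map_zero' := rfl, map_add' := fun _ _ => rfl } :
      CharacterModule M →+ AddCircle (1 : ℚ)) c Finset.univ
  have hΦ : ∀ e, Φ e = ∑ i, x i (e i) := by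
    intro e; exact hsum _ _ _
  obtain ⟨Ψ, hΨ⟩ := char_factor ρ Φ (by
    intro e he
    obtain ⟨h, hh⟩ := inj_factor hE φ (Fintype.linearCombination R e) (by
      rw [← hr, Submodule.span_le]
      rintro _ ⟨j, rfl⟩
      have := congrFun he j
      rw [hρ] at this
      simpa [Fintype.linearCombination_apply] using this)
    have he0 : ∀ i, e i = f i • h 1 := by
      intro i
      have := hh (Pi.single i 1)
      simp only [φ, Fintype.linearCombination_apply_single, one_smul] at this
      rw [← this, ← map_smul, smul_eq_mul, mul_one]
    rw [hΦ]
    have h2 := DFunLike.congr_fun hfx (h 1)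
    rw [hsum] at h2
    simp only [CharacterModule.smul_apply, ← he0] at h2
    exact h2)
  refine ⟨k, fun i j => r j i, fun j => CharacterModule.dual (LinearMap.single R (fun _ => E) j) Ψ,
    ?_, ?_⟩
  · intro i
    ext e
    rw [hsum]
    have h1 := hΨ (Pi.single i e)
    rw [hΦ, Finset.sum_eq_single i (by
      intro j _ hj; rw [Pi.single_eq_of_ne hj]; exact map_zero (x j)) (by simp)] at h1
    rw [Pi.single_eq_same] at h1
    rw [← h1]
    have h3 : ρ (Pi.single i e) = ∑ j, Pi.single j (r j i • e) := by
      ext j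
      rw [hρ, Finset.sum_apply, Finset.sum_eq_single i, Finset.sum_eq_single j]
      · simp
      · intro b _ hb; rw [Pi.single_eq_of_ne hb.symm]
      · simp
      · intro b _ hb; rw [Pi.single_eq_of_ne hb, smul_zero]
      · simp
    rw [h3, map_sum]
    rfl
  · intro j
    have : r j ∈ LinearMap.ker φ := by
      rw [← hr]; exact Submodule.subset_span ⟨j, rfl⟩
    simpa [φ, Fintype.linearCombination_apply, mul_comm] using this

/-- Transpose of a map to a character module. -/
noncomputable def swap (h : A →ₗ[R] CharacterModule B) : B →ₗ[R] CharacterModule A :=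
  CharacterModule.curry (CharacterModule.dual (TensorProduct.comm R B A).toLinearMap
    (CharacterModule.uncurry h))

theorem swap_apply (h : A →ₗ[R] CharacterModule B) (a : A) (b : B) : swap h b a = h a b := rfl

/-- Evaluation. -/
noncomputable def ev (L : Type u) [AddCommGroup L] [Module R L] :
    L →ₗ[R] CharacterModule (CharacterModule L) :=
  swap LinearMap.id

theorem ev_apply (l : L) (c : CharacterModule L) : ev (R := R) L l c = c l := rfl

theorem ev_injective : Function.Injective (ev (R := R) L) := by
  rw [injective_iff_map_eq_zero]
  intro l hl
  exact CharacterModule.eq_zero_of_character_apply (fun c => DFunLike.congr_fun hl c)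

theorem ev_pure (N : Type u) [AddCommGroup N] [Module R N] :
    Function.Injective ((ev (R := R) L).lTensor N) := by
  rw [LinearMap.lTensor_inj_iff_rTensor_inj, rTensor_injective_iff_lcomp_surjective]
  intro h
  exact ⟨CharacterModule.dual (swap h), rfl⟩

theorem flat_of_V (h : ∀ (W : Type u) [AddCommGroup W] [Module R W], V R W X) :
    Module.Flat R X := by
  rw [Module.Flat.iff_rTensor_preserves_injective_linearMap]
  intro N N' _ _ _ _ f hf
  exact (h (N' ⧸ LinearMap.range f)).rTensor f (LinearMap.range f).mkQ hf
    (LinearMap.exact_map_mkQ_range f) (Submodule.mkQ_surjective _)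

theorem inj_char (hL : Module.Flat R L) : Module.Injective R (CharacterModule L) :=
  Module.Baer.injective (Module.Flat.iff_characterModule_baer.1 hL)

/-! ### Closure properties -/

theorem GF.ext_flat_aux [IsNoetherianRing R] (h : SES R L X C) (hL : Module.Flat R L)
    (hC : GF R C) : ∃ L' Y C' : ModuleCat.{u} R, SES R L' Y C' ∧ Module.Flat R L' ∧ GF R C' ∧
      Step R X Y := by
  obtain ⟨C', hC', F, f, g, hF, hf, hfg, hg, -⟩ := hC.right
  obtain ⟨i, p, hi, hip, hp⟩ := h
  have hL1 := inj_char hL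
  have hL2 := char_flat hL1
  have hV : V R (CharacterModule L) C := hC.T _ (Wc.inj _ hL1)
  have h1 := hV _ _ i p hi hip hp
  rw [LinearMap.lTensor_inj_iff_rTensor_inj, rTensor_injective_iff_lcomp_surjective] at h1
  obtain ⟨v, hv⟩ := h1 (ev L)
  have hv : v ∘ₗ i = ev L := hv
  have h2 := SES.of_extension i p hip hp v (by rw [hv]; exact ev_injective)
  rw [hv] at h2
  obtain ⟨Y, hY1, hY2⟩ := SES.third h2
    (SES.prod_left (CharacterModule (CharacterModule L)) ⟨f, g, hf, hfg, hg⟩)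
  have hL' : Module.Flat R (CharacterModule (CharacterModule L) ⧸ LinearMap.range (ev (R := R) L)) :=
    flat_of_V fun W _ _ => V.of_flatF (ev L) (LinearMap.range (ev L)).mkQ
      (LinearMap.exact_map_mkQ_range _) (Submodule.mkQ_surjective _) (ev_pure W)
  refine ⟨ModuleCat.of R _, Y, C', hY2, hL', hC', ?_⟩
  have hF2 : Module.Flat R (CharacterModule (CharacterModule L) × F) :=
    flat_of_V fun W _ _ => V.ext (SES.prod _ _) V.of_flat V.of_flat
  exact Step.of_T hY1 hF2 (T.ext hY2 T.of_flat hC'.T)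

theorem GF.ext_flat [IsNoetherianRing R] (h : SES R L X C) (hL : Module.Flat R L)
    (hC : GF R C) : GF R X := by
  refine GF.intro (fun Y => ∃ L C : ModuleCat.{u} R, SES R L Y C ∧ Module.Flat R L ∧ GF R C)
    ?_ ?_ (ModuleCat.of R X) ⟨ModuleCat.of R L, ModuleCat.of R C, h, hL, hC⟩
  · rintro Y ⟨L, C, h, hL, hC⟩
    exact T.ext h T.of_flat hC.T
  · rintro Y ⟨L, C, h, hL, hC⟩
    obtain ⟨L', Z, C', h1, h2, h3, h4⟩ := GF.ext_flat_aux h hL hC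
    exact ⟨Z, ⟨L', C', h1, h2, h3⟩, h4⟩

theorem GF.ext [IsNoetherianRing R] (h : SES R A X B) (hA : GF R A) (hB : GF R B) : GF R X := by
  refine GF.intro (fun Y => ∃ A B : ModuleCat.{u} R, SES R A Y B ∧ GF R A ∧ GF R B)
    ?_ ?_ (ModuleCat.of R X) ⟨ModuleCat.of R A, ModuleCat.of R B, h, hA, hB⟩
  · rintro Y ⟨A, B, h, hA, hB⟩
    exact T.ext h hA.T hB.T
  · rintro X ⟨A, B, h, hA, hB⟩
    obtain ⟨A1, hA1, F, f, g, hF, hf, hfg, hg, -⟩ := hA.right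
    obtain ⟨X', h1, h2⟩ := SES.pushout h ⟨f, g, hf, hfg, hg⟩
    have hX' : GF R X' := GF.ext_flat h1 hF hB
    obtain ⟨X1, hX1, F', f', g', hF', hf', hfg', hg', -⟩ := hX'.right
    obtain ⟨Y, h3, h4⟩ := SES.third h2 ⟨f', g', hf', hfg', hg'⟩
    exact ⟨Y, ⟨A1, X1, h4, hA1, hX1⟩, Step.of_T h3 hF' (T.ext h4 hA1.T hX1.T)⟩

theorem GF.ker [IsNoetherianRing R] (h : SES R A X B) (hX : GF R X) (hB : GF R B) : GF R A := by
  obtain ⟨X1, hX1, F', f', g', hF', hf', hfg', hg', -⟩ := hX.right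
  obtain ⟨Z, h3, h4⟩ := SES.third h ⟨f', g', hf', hfg', hg'⟩
  exact GF.of_step (T.ker h hX.T hB.T) h3 hF' (GF.ext h4 hB hX1)

/-! ### Dimension -/

variable (R) in
/-- Gorenstein flat dimension at most `n`, inductively. -/
def Dn : ∀ (_ : ℕ) (X : Type u) [AddCommGroup X] [Module R X], Prop
  | 0, X, _, _ => GF R X
  | n + 1, X, _, _ => ∃ K G : ModuleCat.{u} R, SES R K G X ∧ GF R G ∧ Dn n K

theorem Dn.syz [IsNoetherianRing R] (n : ℕ) (hX : Dn R (n + 1) X) [Module.Projective R P]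
    (h : SES R A P X) : Dn R n A := by
  obtain ⟨K, G, hK, hG, hn⟩ := hX
  have h1 := SES.schanuel hK h
  cases n with
  | zero =>
    exact GF.ker h1 (GF.ext (SES.prod K P) hn (GF.of_flat inferInstance)) hG
  | succ n =>
    obtain ⟨K2, G1, hK2, hG1, hn⟩ := hn
    obtain ⟨Y, h2, h3⟩ := SES.third' (SES.prod_right P hK2) h1
    exact ⟨K2, Y, h3, GF.ker h2 (GF.ext (SES.prod G1 P) hG1 (GF.of_flat inferInstance)) hG, hn⟩

theorem SES.congr (e : C ≃ₗ[R] Y) (h : SES R A B C) : SES R A B Y := by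
  obtain ⟨f, g, hf, hfg, hg⟩ := h
  refine ⟨f, e.toLinearMap ∘ₗ g, hf, ?_, e.surjective.comp hg⟩
  intro x
  rw [← hfg x]
  simp

theorem Dn.congr (e : X ≃ₗ[R] Y) : ∀ n, Dn R n X → Dn R n Y
  | 0, h => GF.congr e h
  | _ + 1, ⟨K, G, hK, hG, hn⟩ => ⟨K, G, hK.congr e, hG, hn⟩

end Noeth
section Witness

variable {R : Type u} [CommRing R]

/-! ### Comparison with the witnesses -/

theorem ker_eq_range_comp {F0 F1 F2 Z1 Z2 : Type u} [AddCommGroup F0] [Module R F0]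
    [AddCommGroup F1] [Module R F1] [AddCommGroup F2] [Module R F2]
    [AddCommGroup Z1] [Module R Z1] [AddCommGroup Z2] [Module R Z2]
    (i : Z1 →ₗ[R] F0) (p : F1 →ₗ[R] Z1) (i' : Z2 →ₗ[R] F1) (p' : F2 →ₗ[R] Z2)
    (hi : Function.Injective i) (hip : Function.Exact i' p) (hp' : Function.Surjective p') :
    LinearMap.ker (i ∘ₗ p) = LinearMap.range (i' ∘ₗ p') := by
  rw [LinearMap.ker_comp_of_ker_eq_bot _ (LinearMap.ker_eq_bot.2 hi),
    LinearMap.range_comp_of_range_eq_top _ (LinearMap.range_eq_top.2 hp'),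
    LinearMap.exact_iff.1 hip]

theorem isGorensteinFlat_of_GF {X : Type u} [AddCommGroup X] [Module R X] (h : GF R X) :
    IsGorensteinFlat R X := by
  obtain ⟨Z, hZ, ⟨e⟩⟩ := h
  choose F f g hF hf hfg hg hE using hZ
  have hex : ∀ i : ℤ, LinearMap.ker (f i ∘ₗ g (i + 1)) =
      LinearMap.range (f (i + 1) ∘ₗ g (i + 1 + 1)) := fun i =>
    ker_eq_range_comp _ _ _ _ (hf i) (hfg (i + 1)) (hg _)
  refine ⟨{ F := fun i => F i, flat := hF, d := fun i => f i ∘ₗ g (i + 1)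
            d_comp_d := ?_, exact := hex, tensor_exact := ?_, im_iso := ?_ }⟩
  · intro i
    ext x
    have : (f (i + 1) ∘ₗ g (i + 1 + 1)) x ∈ LinearMap.ker (f i ∘ₗ g (i + 1)) := by
      rw [hex]; exact ⟨x, rfl⟩
    exact this
  · intro E _ _ hE' i
    simp only [LinearMap.lTensor_comp]
    exact ker_eq_range_comp _ _ _ _ (hE i E hE') (lTensor_exact E (hfg (i + 1)) (hg _))
      (LinearMap.lTensor_surjective E (hg _))
  · have h1 : LinearMap.range (f (-1) ∘ₗ g (-1 + 1)) = LinearMap.range (f (-1)) :=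
      LinearMap.range_comp_of_range_eq_top _ (LinearMap.range_eq_top.2 (hg _))
    exact ⟨e.trans ((LinearEquiv.ofInjective (f (-1)) (hf (-1))).trans (LinearEquiv.ofEq _ _ h1.symm))⟩

theorem liftQ_range_injective {F0 F1 F2 Z : Type u} [AddCommGroup F0] [Module R F0]
    [AddCommGroup F1] [Module R F1] [AddCommGroup F2] [Module R F2] [AddCommGroup Z] [Module R Z]
    (d : F1 →ₗ[R] F0) (d' : F2 →ₗ[R] F1) (h : LinearMap.ker d = LinearMap.range d')
    (q : F1 →ₗ[R] Z) (hq : Function.Surjective q) (hq' : q ∘ₗ d' = 0) (i : Z →ₗ[R] F0)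
    (hi : i ∘ₗ q = d) : Function.Injective i := by
  rw [injective_iff_map_eq_zero]
  intro x hx
  obtain ⟨y, rfl⟩ := hq x
  have : y ∈ LinearMap.ker d := by rw [← hi]; exact hx
  rw [h] at this
  obtain ⟨z, rfl⟩ := this
  exact LinearMap.congr_fun hq' z

theorem GF_of_isGorensteinFlat {X : Type u} [AddCommGroup X] [Module R X]
    (h : IsGorensteinFlat R X) : GF R X := by
  obtain ⟨w⟩ := h
  obtain ⟨F, flat, d, -, hex, htex, ⟨e⟩⟩ := w
  rename_i acg mod
  refine ⟨fun i => ModuleCat.of R (F i ⧸ LinearMap.range (d i)), ?_, ?_⟩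
  · intro i
    let q : F (i + 1) →ₗ[R] F (i + 1) ⧸ LinearMap.range (d (i + 1)) := Submodule.mkQ _
    have hq : Function.Surjective q := Submodule.mkQ_surjective _
    have hq' : q ∘ₗ d (i + 1) = 0 := LinearMap.range_mkQ_comp _
    let j : F (i + 1) ⧸ LinearMap.range (d (i + 1)) →ₗ[R] F i :=
      (LinearMap.range (d (i + 1))).liftQ (d i) (hex i).ge
    have hj : j ∘ₗ q = d i := Submodule.liftQ_mkQ _ _ _
    refine ⟨ModuleCat.of R (F i), j, (LinearMap.range (d i)).mkQ, flat i,
      liftQ_range_injective _ _ (hex i) q hq hq' j hj, ?_, Submodule.mkQ_surjective _, ?_⟩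
    · have : LinearMap.range j = LinearMap.range (d i) := by
        rw [← hj, LinearMap.range_comp_of_range_eq_top _ (LinearMap.range_eq_top.2 hq)]
      rw [LinearMap.exact_iff]
      exact (Submodule.ker_mkQ _).trans this.symm
    · intro E _ _ hE
      refine liftQ_range_injective _ _ (htex E hE i) (q.lTensor E)
        (LinearMap.lTensor_surjective E hq) ?_ (j.lTensor E) ?_
      · rw [← LinearMap.lTensor_comp, hq', LinearMap.lTensor_zero]
      · rw [← LinearMap.lTensor_comp, hj]
  · have h0 : LinearMap.ker (d (-1)) = LinearMap.range (d 0) := hex (-1)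
    exact ⟨e.trans ((d (-1)).quotKerEquivRange.symm.trans (Submodule.quotEquivOfEq _ _ h0))⟩

theorem Dn_of_witness : ∀ (n : ℕ) (M : Type u) [AddCommGroup M] [Module R M],
    GfdWitness R M n → Dn R n M
  | 0, M, _, _, w => by
    obtain ⟨G, gf, triv, π, π_surj, d, h0, h⟩ := w
    rename_i acg mod
    have : Subsingleton (G (0 + 1)) := triv 1 zero_lt_one
    have h1 : LinearMap.ker π = ⊥ := by
      rw [h0, Subsingleton.elim (d 0) 0, LinearMap.range_zero]
    exact (GF_of_isGorensteinFlat (gf 0 le_rfl)).congr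
      (LinearEquiv.ofBijective π ⟨LinearMap.ker_eq_bot.1 h1, π_surj⟩)
  | n + 1, M, _, _, w => by
    obtain ⟨G, gf, triv, π, π_surj, d, h0, h⟩ := w
    rename_i acg mod
    refine ⟨ModuleCat.of R (LinearMap.ker π), ModuleCat.of R (G 0),
      ⟨(LinearMap.ker π).subtype, π, Subtype.val_injective, LinearMap.exact_subtype_ker_map _,
        π_surj⟩, GF_of_isGorensteinFlat (gf 0 (Nat.zero_le _)), ?_⟩
    have hmem : ∀ x, d 0 x ∈ LinearMap.ker π := fun x => by rw [h0]; exact ⟨x, rfl⟩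
    refine Dn_of_witness n (LinearMap.ker π)
      { G := fun i => G (i + 1)
        gf := fun i hi => gf (i + 1) (by omega)
        triv := fun i hi => triv (i + 1) (by omega)
        π := (d 0).codRestrict _ hmem
        π_surj := ?_
        d := fun i => d (i + 1)
        exact_zero := ?_
        exact := fun i => h (i + 1) }
    · rintro ⟨x, hx⟩
      have hx' := hx
      rw [h0] at hx'
      obtain ⟨y, rfl⟩ := hx'
      exact ⟨y, rfl⟩
    · rw [LinearMap.ker_codRestrict]; exact h 0

/-- The sequence with one more entry in front. -/
def consSeq (M : ModuleCat.{u} R) (s : ℕ → ModuleCat.{u} R) : ℕ → ModuleCat.{u} R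
  | 0 => M
  | i + 1 => s i

theorem witness_of_Dn : ∀ (n : ℕ) (M : Type u) [AddCommGroup M] [Module R M],
    Dn R n M → Nonempty (GfdWitness R M n)
  | 0, M, _, _, hM => by
    let s : ℕ → ModuleCat.{u} R :=
      consSeq (ModuleCat.of R M) (fun _ => ModuleCat.of R PUnit.{u+1})
    have hs : ∀ i, Subsingleton (s (i + 1)) := fun i =>
      inferInstanceAs (Subsingleton PUnit.{u+1})
    refine ⟨{ G := fun i => s i
              gf := ?_
              triv := ?_
              π := (LinearMap.id : M →ₗ[R] M)
              π_surj := Function.surjective_id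
              d := fun i => 0
              exact_zero := ?_
              exact := ?_ }⟩
    · intro i hi
      obtain rfl : i = 0 := by omega
      exact isGorensteinFlat_of_GF hM
    · intro i hi
      obtain ⟨j, rfl⟩ : ∃ j, i = j + 1 := ⟨i - 1, by omega⟩
      exact hs j
    · rw [LinearMap.range_zero]; exact LinearMap.ker_id
    · intro i
      have := hs i
      exact Subsingleton.elim _ _
  | n + 1, M, _, _, hM => by
    obtain ⟨K, G0, ⟨f, g, hf, hfg, hg⟩, hG0, hn⟩ := hM
    obtain ⟨⟨G, gf, triv, π, π_surj, d, h0, h⟩⟩ := witness_of_Dn n K hn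
    rename_i acg mod
    let s : ℕ → ModuleCat.{u} R := consSeq G0 (fun i => ModuleCat.of R (G i))
    refine ⟨{ G := fun i => s i
              gf := ?_
              triv := ?_
              π := g
              π_surj := hg
              d := fun i => match i with
                | 0 => f ∘ₗ π
                | i + 1 => d i
              exact_zero := ?_
              exact := ?_ }⟩
    · rintro (_ | i) hi
      · exact isGorensteinFlat_of_GF hG0
      · exact gf i (by omega)
    · rintro (_ | i) hi
      · omega
      · exact triv i (by omega)
    · refine (LinearMap.exact_iff.1 hfg).trans ?_
      exact (LinearMap.range_comp_of_range_eq_top _ (LinearMap.range_eq_top.2 π_surj)).symm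
    · rintro (_ | i)
      · refine (LinearMap.ker_comp_of_ker_eq_bot _ (LinearMap.ker_eq_bot.2 hf)).trans ?_
        exact h0
      · exact h i

end Witness
section BaseChange

variable {R S : Type u} [CommRing R] [CommRing S] [Algebra R S]
variable {A B C K F X Y M : Type u}
  [AddCommGroup A] [Module R A] [AddCommGroup B] [Module R B] [AddCommGroup C] [Module R C]
  [AddCommGroup K] [Module R K] [AddCommGroup F] [Module R F] [AddCommGroup X] [Module R X]
  [AddCommGroup Y] [Module R Y] [AddCommGroup M] [Module R M]

/-! ### Base change -/

theorem bc_injective [Module.Flat R S] (f : K →ₗ[R] F) (hf : Function.Injective f) :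
    Function.Injective (f.baseChange S) :=
  Module.Flat.lTensor_preserves_injective_linearMap (M := S) f hf

theorem bc_surjective (f : K →ₗ[R] F) (hf : Function.Surjective f) :
    Function.Surjective (f.baseChange S) :=
  LinearMap.lTensor_surjective S hf

theorem bc_exact (f : A →ₗ[R] B) (g : B →ₗ[R] C) (hfg : Function.Exact f g)
    (hg : Function.Surjective g) : Function.Exact (f.baseChange S) (g.baseChange S) :=
  lTensor_exact S hfg hg

theorem SES.baseChange (S : Type u) [CommRing S] [Algebra R S] [Module.Flat R S]
    (h : SES R A B C) : SES S (S ⊗[R] A) (S ⊗[R] B) (S ⊗[R] C) := by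
  obtain ⟨f, g, hf, hfg, hg⟩ := h
  exact ⟨f.baseChange S, g.baseChange S, bc_injective f hf, bc_exact f g hfg hg,
    bc_surjective g hg⟩

theorem injective_restrict [Module.Flat R S] (E : Type u) [AddCommGroup E] [Module R E]
    [Module S E] [IsScalarTower R S E] (hE : Module.Injective S E) : Module.Injective R E := by
  refine ⟨fun X Y _ _ _ _ f hf g => ?_⟩
  obtain ⟨k, hk⟩ := hE.out (f.baseChange S) (bc_injective f hf) (g.liftBaseChange S)
  refine ⟨k.restrictScalars R ∘ₗ TensorProduct.mk R S Y 1, fun x => ?_⟩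
  have := hk (1 ⊗ₜ x)
  simpa using this

theorem lTensor_bc_injective_iff (E : Type u) [AddCommGroup E] [Module R E]
    [Module S E] [IsScalarTower R S E] (f : K →ₗ[R] F) :
    Function.Injective ((f.baseChange S).lTensor E) ↔ Function.Injective (f.lTensor E) := by
  let e1 := TensorProduct.AlgebraTensorModule.cancelBaseChange R S S E K
  let e2 := TensorProduct.AlgebraTensorModule.cancelBaseChange R S S E F
  have h : ∀ x, e2 ((f.baseChange S).lTensor E x) = f.lTensor E (e1 x) := by
    intro x
    induction x with
    | zero => simp
    | add x y hx hy => simp only [map_add, hx, hy]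
    | tmul a y =>
      induction y with
      | zero => simp
      | add x y hx hy => simp only [TensorProduct.tmul_add, map_add, hx, hy]
      | tmul s k => simp [e1, e2]
  have h' : e2 ∘ (f.baseChange S).lTensor E = f.lTensor E ∘ e1 := funext h
  rw [← e2.injective.of_comp_iff, h', Function.Injective.of_comp_iff' _ e1.bijective]

theorem Step.baseChange (S : Type u) [CommRing S] [Algebra R S] [Module.Flat R S]
    (h : Step R K X) : Step S (S ⊗[R] K) (S ⊗[R] X) := by
  obtain ⟨F, f, g, hF, hf, hfg, hg, hE⟩ := h
  refine ⟨ModuleCat.of S (S ⊗[R] F), f.baseChange S, g.baseChange S,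
    inferInstanceAs (Module.Flat S (S ⊗[R] F)), bc_injective f hf,
    bc_exact f g hfg hg, bc_surjective g hg, ?_⟩
  intro E _ _ hE'
  let _ : Module R E := Module.compHom E (algebraMap R S)
  have : IsScalarTower R S E := IsScalarTower.of_algebraMap_smul fun _ _ => rfl
  exact (lTensor_bc_injective_iff E f).2 (hE E (injective_restrict E hE'))

theorem GF.baseChange (S : Type u) [CommRing S] [Algebra R S] [Module.Flat R S]
    (h : GF R X) : GF S (S ⊗[R] X) := by
  obtain ⟨Z, hZ, ⟨e⟩⟩ := h
  exact ⟨fun i => ModuleCat.of S (S ⊗[R] Z i), fun i => (hZ i).baseChange S,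
    ⟨e.baseChange R S _ _⟩⟩

theorem Dn.baseChange (S : Type u) [CommRing S] [Algebra R S] [Module.Flat R S] :
    ∀ (n : ℕ) (X : Type u) [AddCommGroup X] [Module R X], Dn R n X → Dn S n (S ⊗[R] X)
  | 0, _, _, _, h => GF.baseChange S h
  | n + 1, _, _, _, ⟨K, G, hK, hG, hn⟩ =>
    ⟨ModuleCat.of S (S ⊗[R] K), ModuleCat.of S (S ⊗[R] G), hK.baseChange S, hG.baseChange S,
      Dn.baseChange S n K hn⟩

/-! ### Descent -/

theorem V_descent [Module.FaithfullyFlat R S] (hM : GF S (S ⊗[R] M))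
    (E : Type u) [AddCommGroup E] [Module R E] (hE : Module.Injective R E) : V R E M := by
  obtain ⟨P, K, f, g, hP, hf, hfg, hg⟩ := exists_free (R := R) M
  refine V.of_flatF f g hfg hg ?_
  obtain ⟨⟨E', hE', j, hj⟩⟩ := EnoughInjectives.presentation (ModuleCat.of S (S ⊗[R] E))
  have hE'' : Module.Injective S E' := Module.injective_module_of_injective_object S E'
  have hj' : Function.Injective j.hom := (ModuleCat.mono_iff_injective j).1 hj
  let _ : Module R E' := Module.compHom E' (algebraMap R S)
  have : IsScalarTower R S E' := IsScalarTower.of_algebraMap_smul fun _ _ => rfl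
  let j0 : S ⊗[R] E →ₗ[S] E' := j.hom
  let i : E →ₗ[R] E' := j0.restrictScalars R ∘ₗ TensorProduct.mk R S E 1
  have hi : Function.Injective i :=
    hj'.comp (Module.FaithfullyFlat.tensorProduct_mk_injective E)
  obtain ⟨r, hr⟩ := hE.out i hi LinearMap.id
  have hri : r ∘ₗ i = LinearMap.id := LinearMap.ext hr
  have h1 : Function.Injective (f.lTensor E') :=
    (lTensor_bc_injective_iff (S := S) E' f).1 (hM.T E' (Wc.inj _ hE'') _ _ (f.baseChange S)
      (g.baseChange S) (bc_injective f hf) (bc_exact f g hfg hg) (bc_surjective g hg))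
  have h2 : Function.Injective (i.rTensor K) := by
    apply Function.LeftInverse.injective (g := r.rTensor K)
    intro x
    rw [← LinearMap.comp_apply, ← LinearMap.rTensor_comp, hri]
    simp
  have h3 := h1.comp h2
  refine Function.Injective.of_comp (f := i.rTensor P) ?_
  have : i.rTensor P ∘ f.lTensor E = f.lTensor E' ∘ i.rTensor K := funext (lr_comm i f)
  rw [this]
  exact h3

theorem T_descent [IsNoetherianRing S] [Module.FaithfullyFlat R S] (hM : GF S (S ⊗[R] M)) :
    T R M := by
  refine T.of_class (fun X => GF S (S ⊗[R] X)) ?_ ?_ (ModuleCat.of R M) hM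
  · intro X hX E _ _ hE
    exact V_descent hX E hE
  · intro X hX
    obtain ⟨P, K, f, g, hP, hf, hfg, hg⟩ := exists_free (R := R) X
    exact ⟨K, P, f, g, GF.ker (SES.baseChange S ⟨f, g, hf, hfg, hg⟩)
      (GF.of_flat inferInstance) hX, inferInstance, hf, hfg, hg⟩

theorem flat_ker [Module.Flat R F] [Module.Flat R B] (h : SES R A B F) :
    Module.Flat R A := by
  obtain ⟨l, m, hl, hlm, hm⟩ := h
  rw [Module.Flat.iff_rTensor_preserves_injective_linearMap]
  intro N N' _ _ _ _ a ha
  have hV : V R N F := V.of_flat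
  have h1 : Function.Injective (l.lTensor N) := hV _ _ l m hl hlm hm
  have h2 : Function.Injective (a.rTensor B) :=
    Module.Flat.rTensor_preserves_injective_linearMap a ha
  refine Function.Injective.of_comp (f := l.lTensor N') ?_
  have : l.lTensor N' ∘ a.rTensor A = a.rTensor B ∘ l.lTensor N :=
    funext fun x => (lr_comm a l x).symm
  rw [this]
  exact h2.comp h1

theorem right_descent [IsNoetherianRing S] [Module.FaithfullyFlat R S] (hM : GF S (S ⊗[R] M)) :
    ∃ C : ModuleCat.{u} R, GF S (S ⊗[R] C) ∧ Step R M C := by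
  obtain ⟨C', hC', F, j, p, hF, hj, hjp, hp, -⟩ := hM.right
  let _ : Module R F := Module.compHom F (algebraMap R S)
  have : IsScalarTower R S F := IsScalarTower.of_algebraMap_smul fun _ _ => rfl
  have hFR : Module.Flat R F := Module.Flat.trans R S F
  let i : M →ₗ[R] F := j.restrictScalars R ∘ₗ TensorProduct.mk R S M 1
  have hi : Function.Injective i :=
    hj.comp (Module.FaithfullyFlat.tensorProduct_mk_injective M)
  let q := (LinearMap.range i).mkQ
  have hC : SES R M F (F ⧸ LinearMap.range i) := SES.of_injective i hi
  let m : S ⊗[R] F →ₗ[S] F := (LinearMap.id : F →ₗ[R] F).liftBaseChange S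
  have hm : Function.Surjective m := fun x => ⟨1 ⊗ₜ x, by simp [m]⟩
  have hmj : m ∘ₗ i.baseChange S = j := by
    ext x
    simp [m, i]
  have hL : Module.Flat S (LinearMap.ker m) := by
    have h0 : SES S (LinearMap.ker m) (S ⊗[R] F) F :=
      ⟨(LinearMap.ker m).subtype, m, Subtype.val_injective, LinearMap.exact_subtype_ker_map m, hm⟩
    exact flat_ker h0
  have h1 : SES S (LinearMap.ker m) (S ⊗[R] (F ⧸ LinearMap.range i)) C' := by
    refine SES.coker (i.baseChange S) (q.baseChange S)
      (bc_exact i q (LinearMap.exact_map_mkQ_range i) (Submodule.mkQ_surjective _))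
      (bc_surjective q (Submodule.mkQ_surjective _))
      (LinearMap.ker m).subtype m Subtype.val_injective (LinearMap.exact_subtype_ker_map _) hm
      ?_ p ?_ hp
    · rw [hmj]; exact hj
    · rw [hmj]; exact hjp
  have hGF : GF S (S ⊗[R] (F ⧸ LinearMap.range i)) := GF.ext_flat h1 hL hC'
  exact ⟨ModuleCat.of R (F ⧸ LinearMap.range i), hGF, Step.of_T hC hFR (T_descent hGF)⟩

theorem GF_descent [IsNoetherianRing S] [Module.FaithfullyFlat R S] (hM : GF S (S ⊗[R] M)) :
    GF R M :=
  GF.intro (fun X => GF S (S ⊗[R] X)) (fun _ hX => T_descent hX)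
    (fun _ hX => right_descent hX) (ModuleCat.of R M) hM

theorem Dn_descent [IsNoetherianRing S] [Module.FaithfullyFlat R S] :
    ∀ (n : ℕ) (X : Type u) [AddCommGroup X] [Module R X], Dn S n (S ⊗[R] X) → Dn R n X
  | 0, _, _, _, h => GF_descent (S := S) h
  | n + 1, X, _, _, h => by
    obtain ⟨P, K, f, g, hP, hf, hfg, hg⟩ := exists_free (R := R) X
    exact ⟨K, P, ⟨f, g, hf, hfg, hg⟩, GF.of_flat inferInstance,
      Dn_descent n K (Dn.syz n h (SES.baseChange S ⟨f, g, hf, hfg, hg⟩))⟩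

end BaseChange

end GFD

theorem gfd_baseChange_le_and_eq_of_faithfullyFlat
    (R S : Type u) [CommRing R] [CommRing S] [IsNoetherianRing R] [IsNoetherianRing S]
    [Algebra R S] [Module.Flat R S]
    (M : Type u) [AddCommGroup M] [Module R M] :
    gfd S (S ⊗[R] M) ≤ gfd R M ∧
      (Module.FaithfullyFlat R S →
        gfd S (S ⊗[R] M) = gfd R M ∧ (gfd R M < ⊤ ↔ gfd S (S ⊗[R] M) < ⊤)) := by
  have key : ∀ n : ℕ, Nonempty (GfdWitness R M n) → Nonempty (GfdWitness S (S ⊗[R] M) n) :=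
    fun n ⟨w⟩ => GFD.witness_of_Dn n _ (GFD.Dn.baseChange S n M (GFD.Dn_of_witness n M w))
  have hle : gfd S (S ⊗[R] M) ≤ gfd R M := by
    refine sInf_le_sInf ?_
    rintro c ⟨n, hc, hn⟩
    exact ⟨n, hc, key n hn⟩
  refine ⟨hle, fun hff => ?_⟩
  have heq : gfd S (S ⊗[R] M) = gfd R M := by
    refine le_antisymm hle (sInf_le_sInf ?_)
    rintro c ⟨n, hc, ⟨w⟩⟩
    exact ⟨n, hc, GFD.witness_of_Dn n M (GFD.Dn_descent (S := S) n M (GFD.Dn_of_witness n _ w))⟩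
  exact ⟨heq, by rw [heq]⟩
end

section
/- Let φ : R → S be a faithfully flat homomorphism of commutative noetherian rings such that the Krull dimension of S is finite, and let M be a cotorsion R-module (i.e., Ext^1_R(F, M) = 0 for every flat R-module F). Then Gid_R(M) = Gid_S(Hom_R(S, M)); in particular, Gid_R(M) is finite if and only if Gid_S(Hom_R(S, M)) is finite. -/
/-!
Let `φ : R → S` be a faithfully flat homomorphism of commutative noetherian rings with
`dim S < ∞`, and let `M` be a cotorsion `R`-module (`Ext¹_R(F, M) = 0` for every flat
`R`-module `F`). Then `Gid_R M = Gid_S (Hom_R(S, M))` (with the `S`-module structure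
`(s • f) t = f (s * t)` on `Hom_R(S, M)`); in particular the two dimensions are
simultaneously finite.
-/

universe u

open CategoryTheory

/-- A witness that `J` is a Gorenstein injective `R`-module: an exact complex `I` of
injective `R`-modules (with differentials `d i : I (i+1) →ₗ[R] I i`) such that
`Hom_R(E, I)` is exact for every injective `R`-module `E`, together with an
isomorphism `J ≅ ker (I 0 → I (-1))`. -/
structure GorensteinInjectiveWitness (R : Type u) [CommRing R]
    (J : Type u) [AddCommGroup J] [Module R J] : Type (u + 1) where
  I : ℤ → Type u
  [acg : ∀ i, AddCommGroup (I i)]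
  [mod : ∀ i, Module R (I i)]
  inj : ∀ i, Module.Injective R (I i)
  d : ∀ i : ℤ, I (i + 1) →ₗ[R] I i
  d_comp_d : ∀ i : ℤ, (d i).comp (d (i + 1)) = 0
  exact : ∀ i : ℤ, LinearMap.ker (d i) = LinearMap.range (d (i + 1))
  hom_exact : ∀ (E : Type u) [AddCommGroup E] [Module R E], Module.Injective R E →
    ∀ (i : ℤ) (f : E →ₗ[R] I (i + 1)), (d i).comp f = 0 →
      ∃ g : E →ₗ[R] I (i + 1 + 1), (d (i + 1)).comp g = f
  ker_iso : Nonempty (J ≃ₗ[R] LinearMap.ker (d (-1)))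

/-- `J` is a Gorenstein injective `R`-module. -/
def IsGorensteinInjective (R : Type u) [CommRing R]
    (J : Type u) [AddCommGroup J] [Module R J] : Prop :=
  Nonempty (GorensteinInjectiveWitness R J)

/-- A witness for an exact sequence `0 → M → J⁰ → J¹ → ⋯ → Jⁿ → 0` with each `Jⁱ`
Gorenstein injective (modules beyond index `n` are trivial, which encodes that the
sequence stops at `Jⁿ`). -/
structure GidWitness (R : Type u) [CommRing R]
    (M : Type u) [AddCommGroup M] [Module R M] (n : ℕ) : Type (u + 1) where
  J : ℕ → Type u
  [acg : ∀ i, AddCommGroup (J i)]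
  [mod : ∀ i, Module R (J i)]
  gi : ∀ i ≤ n, IsGorensteinInjective R (J i)
  triv : ∀ i, n < i → Subsingleton (J i)
  ε : M →ₗ[R] J 0
  ε_inj : Function.Injective ε
  d : ∀ i : ℕ, J i →ₗ[R] J (i + 1)
  exact_zero : LinearMap.ker (d 0) = LinearMap.range ε
  exact : ∀ i : ℕ, LinearMap.ker (d (i + 1)) = LinearMap.range (d i)

/-- The Gorenstein injective dimension of a module: the least `n` admitting an exact
sequence `0 → M → J⁰ → ⋯ → Jⁿ → 0` of Gorenstein injective modules, as an element
of `ℕ∞` (`⊤` if there is no such `n`). -/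
noncomputable def gid (R : Type u) [CommRing R]
    (M : Type u) [AddCommGroup M] [Module R M] : ℕ∞ :=
  sInf {c : ℕ∞ | ∃ n : ℕ, c = n ∧ Nonempty (GidWitness R M n)}

section HomModule

variable (R S : Type u) [CommRing R] [CommRing S] [Algebra R S]
variable (E : Type u) [AddCommGroup E] [Module R E]

/-- The scalar action of `S` on `Hom_R(S, E)` given by `(s • f) t = f (s * t)`. -/
noncomputable instance homSMul : SMul S (S →ₗ[R] E) :=
  ⟨fun s f => f.comp (LinearMap.mulLeft R s)⟩

lemma homSMul_apply (s : S) (f : S →ₗ[R] E) (t : S) : (s • f) t = f (s * t) := rfl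

/-- The `S`-module structure on `Hom_R(S, E)` given by `(s • f) t = f (s * t)`. -/
noncomputable instance homModule : Module S (S →ₗ[R] E) where
  one_smul f := LinearMap.ext fun t => by rw [homSMul_apply, one_mul]
  mul_smul s s' f := LinearMap.ext fun t => by
    rw [homSMul_apply, homSMul_apply, homSMul_apply, mul_assoc, mul_left_comm]
  smul_zero s := LinearMap.ext fun t => by rw [homSMul_apply]; rfl
  smul_add s f g := LinearMap.ext fun t => by
    rw [homSMul_apply, LinearMap.add_apply, LinearMap.add_apply, homSMul_apply, homSMul_apply]
  add_smul s s' f := LinearMap.ext fun t => by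
    rw [homSMul_apply, LinearMap.add_apply, homSMul_apply, homSMul_apply, add_mul, map_add]
  zero_smul f := LinearMap.ext fun t => by
    rw [homSMul_apply, zero_mul, map_zero]; rfl

end HomModule

attribute [local instance] HasDerivedCategory.standard
attribute [local instance] CategoryTheory.hasExt_of_hasDerivedCategory

set_option synthInstance.maxHeartbeats 1000000
set_option maxHeartbeats 1000000


namespace GidAux

section Basics

variable {R : Type u} [CommRing R]

/-- `0 → A → B → C → 0` is exact. -/
structure SES {A B C : Type u} [AddCommGroup A] [AddCommGroup B] [AddCommGroup C]
    [Module R A] [Module R B] [Module R C] (f : A →ₗ[R] B) (g : B →ₗ[R] C) : Prop where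
  inj : Function.Injective f
  exact : ∀ b, g b = 0 ↔ ∃ a, f a = b
  surj : Function.Surjective g

variable {A B C X Y N : Type u} [AddCommGroup A] [AddCommGroup B] [AddCommGroup C]
    [AddCommGroup X] [AddCommGroup Y] [AddCommGroup N]
    [Module R A] [Module R B] [Module R C] [Module R X] [Module R Y] [Module R N]

lemma SES.zero {f : A →ₗ[R] B} {g : B →ₗ[R] C} (h : SES f g) (a : A) : g (f a) = 0 :=
  (h.exact _).2 ⟨a, rfl⟩

lemma SES.comp_zero {f : A →ₗ[R] B} {g : B →ₗ[R] C} (h : SES f g) : g ∘ₗ f = 0 :=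
  LinearMap.ext h.zero

lemma SES.fexact {f : A →ₗ[R] B} {g : B →ₗ[R] C} (h : SES f g) : Function.Exact f g :=
  fun b => h.exact b

/-- descend a map along a surjection. -/
lemma SES.desc {f : A →ₗ[R] B} {g : B →ₗ[R] C} (h : SES f g) (k : B →ₗ[R] X)
    (hk : ∀ a, k (f a) = 0) : ∃ l : C →ₗ[R] X, ∀ b, l (g b) = k b := by
  choose s hs using h.surj
  have key : ∀ b b', g b = g b' → k b = k b' := by
    intro b b' e
    have : g (b - b') = 0 := by rw [map_sub, e, sub_self]
    obtain ⟨a, ha⟩ := (h.exact _).1 this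
    have h2 := hk a
    rw [ha, map_sub, sub_eq_zero] at h2
    exact h2
  refine ⟨{ toFun := fun c => k (s c), map_add' := ?_, map_smul' := ?_ }, ?_⟩
  · intro c c'
    rw [← map_add]; apply key; simp [hs]
  · intro r c
    rw [RingHom.id_apply, ← map_smul]; apply key; simp [hs]
  · intro b
    exact key _ _ (hs _)

/-- lift a map through an injection. -/
lemma SES.lift {f : A →ₗ[R] B} {g : B →ₗ[R] C} (h : SES f g) (k : X →ₗ[R] B)
    (hk : ∀ x, g (k x) = 0) : ∃ l : X →ₗ[R] A, ∀ x, f (l x) = k x := by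
  have : ∀ x, ∃ a, f a = k x := fun x => (h.exact _).1 (hk x)
  choose l hl using this
  refine ⟨{ toFun := l, map_add' := ?_, map_smul' := ?_ }, hl⟩
  · intro x y; apply h.inj; simp [hl]
  · intro r x; apply h.inj; simp [hl]

lemma SES.ker_subtype {g : B →ₗ[R] C} (hg : Function.Surjective g) :
    SES (LinearMap.ker g).subtype g where
  inj := Subtype.val_injective
  exact b := ⟨fun h => ⟨⟨b, h⟩, rfl⟩, by rintro ⟨a, rfl⟩; exact a.2⟩
  surj := hg

lemma SES.range_mkQ {f : A →ₗ[R] B} (hf : Function.Injective f) :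
    SES f (LinearMap.range f).mkQ where
  inj := hf
  exact b := by rw [Submodule.mkQ_apply, Submodule.Quotient.mk_eq_zero]; rfl
  surj := Submodule.mkQ_surjective _

lemma SES.prod {A' B' C' : Type u} [AddCommGroup A'] [AddCommGroup B'] [AddCommGroup C']
    [Module R A'] [Module R B'] [Module R C']
    {f : A →ₗ[R] B} {g : B →ₗ[R] C} (h : SES f g)
    {f' : A' →ₗ[R] B'} {g' : B' →ₗ[R] C'} (h' : SES f' g') :
    SES (f.prodMap f') (g.prodMap g') where
  inj := by
    rintro ⟨a, b⟩ ⟨c, d⟩ e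
    simp only [LinearMap.prodMap_apply, Prod.mk.injEq] at e
    rw [h.inj e.1, h'.inj e.2]
  exact := by
    rintro ⟨b, b'⟩
    simp only [LinearMap.prodMap_apply, Prod.mk_eq_zero, h.exact, h'.exact, Prod.exists,
      Prod.mk.injEq]
    constructor
    · rintro ⟨⟨a, ha⟩, ⟨c, hc⟩⟩; exact ⟨a, c, ha, hc⟩
    · rintro ⟨a, c, ha, hc⟩; exact ⟨⟨a, ha⟩, ⟨c, hc⟩⟩
  surj := by
    rintro ⟨c, c'⟩
    obtain ⟨b, hb⟩ := h.surj c
    obtain ⟨b', hb'⟩ := h'.surj c'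
    exact ⟨(b, b'), by simp [hb, hb']⟩

/-- extension property of injectives -/
lemma inj_ext {J : Type u} [AddCommGroup J] [Module R J] (hJ : Module.Injective R J)
    {f : A →ₗ[R] B} (hf : Function.Injective f) (k : A →ₗ[R] J) :
    ∃ l : B →ₗ[R] J, ∀ a, l (f a) = k a :=
  hJ.out f hf k

lemma exists_inj (N : Type u) [AddCommGroup N] [Module R N] :
    ∃ (J : Type u) (_ : AddCommGroup J) (_ : Module R J) (C : Type u) (_ : AddCommGroup C)
      (_ : Module R C) (f : N →ₗ[R] J) (g : J →ₗ[R] C), Module.Injective R J ∧ SES f g := by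
  let p := Classical.choice ((EnoughInjectives.presentation (ModuleCat.of R N)))
  have h1 : Module.Injective R p.J :=
    (Module.injective_iff_injective_object R p.J).2 p.injective
  have h2 : Function.Injective p.f.hom := (ModuleCat.mono_iff_injective p.f).1 p.mono
  exact ⟨p.J, inferInstance, inferInstance, _, inferInstance, inferInstance, p.f.hom, _, h1,
    SES.range_mkQ h2⟩

/-- `Ext¹(X, N) = 0`, in elementary terms. -/
def Ext1Z (R : Type u) [CommRing R] (X N : Type u) [AddCommGroup X] [AddCommGroup N]
    [Module R X] [Module R N] : Prop :=
  ∀ (B C : Type u) [AddCommGroup B] [AddCommGroup C] [Module R B] [Module R C]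
    (f : N →ₗ[R] B) (g : B →ₗ[R] C), SES f g → ∀ h : X →ₗ[R] C, ∃ k : X →ₗ[R] B,
      ∀ x, g (k x) = h x

lemma ext1Z_of_inj {J : Type u} [AddCommGroup J] [Module R J] (hJ : Module.Injective R J)
    {f : N →ₗ[R] J} {g : J →ₗ[R] C} (hs : SES f g)
    (h : ∀ h : X →ₗ[R] C, ∃ k : X →ₗ[R] J, ∀ x, g (k x) = h x) : Ext1Z R X N := by
  intro B D _ _ _ _ i p hip φ
  obtain ⟨e, he⟩ := inj_ext hJ hip.inj f
  obtain ⟨e', he'⟩ := hip.desc (g ∘ₗ e) (fun a => by simp [he, hs.zero])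
  obtain ⟨k, hk⟩ := h (e' ∘ₗ φ)
  have key : ∀ x, ∃ b, p b = φ x ∧ e b = k x := by
    intro x
    obtain ⟨b, hb⟩ := hip.surj (φ x)
    have : g (k x - e b) = 0 := by
      rw [map_sub, hk, LinearMap.comp_apply, ← hb, he', LinearMap.comp_apply, sub_self]
    obtain ⟨n, hn⟩ := (hs.exact _).1 this
    refine ⟨b + i n, by simp [hb, hip.zero], ?_⟩
    rw [map_add, he, hn]; abel
  have uniq : ∀ b, p b = 0 → e b = 0 → b = 0 := by
    intro b h1 h2
    obtain ⟨n, rfl⟩ := (hip.exact _).1 h1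
    rw [he] at h2
    rw [hs.inj (h2.trans (map_zero f).symm), map_zero]
  choose l hl1 hl2 using key
  refine ⟨{ toFun := l, map_add' := ?_, map_smul' := ?_ }, hl1⟩
  · intro x y
    rw [← sub_eq_zero]; apply uniq <;> simp [hl1, hl2]
  · intro r x
    rw [← sub_eq_zero]; apply uniq <;> simp [hl1, hl2]

lemma Ext1Z.extend (h : Ext1Z R C N) {f : A →ₗ[R] B} {g : B →ₗ[R] C} (hs : SES f g)
    (k : A →ₗ[R] N) : ∃ l : B →ₗ[R] N, ∀ a, l (f a) = k a := by
  obtain ⟨J, _, _, D, _, _, i, p, hJ, hip⟩ := exists_inj (R := R) N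
  obtain ⟨e, he⟩ := inj_ext hJ hs.inj (i ∘ₗ k)
  obtain ⟨e', he'⟩ := hs.desc (p ∘ₗ e) (fun a => by simp [he, hip.zero])
  obtain ⟨m, hm⟩ := h _ _ i p hip e'
  obtain ⟨l, hl⟩ := hip.lift (e - m ∘ₗ g) (fun b => by simp [hm, he'])
  refine ⟨l, fun a => hip.inj ?_⟩
  simp [hl, he, hs.zero]

lemma ext1Z_of_extend {P : Type u} [AddCommGroup P] [Module R P] [Module.Projective R P]
    {i : A →ₗ[R] P} {p : P →ₗ[R] X} (hs : SES i p)
    (h : ∀ k : A →ₗ[R] N, ∃ l : P →ₗ[R] N, ∀ a, l (i a) = k a) : Ext1Z R X N := by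
  intro B C _ _ _ _ f g hfg φ
  obtain ⟨m, hm⟩ := Module.projective_lifting_property g (φ ∘ₗ p) hfg.surj
  have hm' : ∀ x, g (m x) = φ (p x) := fun x => LinearMap.congr_fun hm x
  obtain ⟨k, hk⟩ := hfg.lift (m ∘ₗ i) (fun a => by simp [hm', hs.zero])
  obtain ⟨l, hl⟩ := h k
  obtain ⟨t, ht⟩ := hs.desc (m - f ∘ₗ l) (fun a => by simp [hl, hk])
  refine ⟨t, fun x => ?_⟩
  obtain ⟨y, rfl⟩ := hs.surj x
  rw [ht]; simp [hm', hfg.zero]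

lemma Ext1Z.middle {X : Type u} [AddCommGroup X] [Module R X]
    {f : A →ₗ[R] B} {g : B →ₗ[R] C} (hs : SES f g) (hA : Ext1Z R X A) (hC : Ext1Z R X C) :
    Ext1Z R X B := by
  obtain ⟨J, _, _, D, _, _, i, p, hJ, hip⟩ := exists_inj (R := R) B
  refine ext1Z_of_inj hJ hip fun h => ?_
  -- J / A
  have hA' := SES.range_mkQ (R := R) (f := i ∘ₗ f) (hip.inj.comp hs.inj)
  set q := (LinearMap.range (i ∘ₗ f)).mkQ
  obtain ⟨c, hc⟩ := hs.desc (q ∘ₗ i) (fun a => hA'.zero a)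
  obtain ⟨d, hd⟩ := hA'.desc p (fun a => hip.zero _)
  have hcd : SES c d := by
    refine ⟨?_, ?_, ?_⟩
    · rw [injective_iff_map_eq_zero]
      intro x hx
      obtain ⟨b, rfl⟩ := hs.surj x
      rw [hc] at hx
      obtain ⟨a, ha⟩ := (hA'.exact _).1 hx
      rw [← hip.inj ha, hs.zero]
    · intro x
      obtain ⟨j, rfl⟩ := hA'.surj x
      rw [hd, hip.exact]
      constructor
      · rintro ⟨b, rfl⟩; exact ⟨g b, hc b⟩
      · rintro ⟨y, hy⟩
        obtain ⟨b, rfl⟩ := hs.surj y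
        rw [hc, LinearMap.comp_apply, ← sub_eq_zero, ← map_sub] at hy
        obtain ⟨a, ha⟩ := (hA'.exact _).1 hy
        exact ⟨b - f a, by rw [map_sub]; rw [LinearMap.comp_apply] at ha; rw [ha]; abel⟩
    · intro x
      obtain ⟨j, rfl⟩ := hip.surj x
      exact ⟨q j, hd j⟩
  obtain ⟨k, hk⟩ := hC _ _ c d hcd h
  obtain ⟨l, hl⟩ := hA _ _ _ _ hA' k
  exact ⟨l, fun x => by rw [← hd, hl, hk]⟩

lemma ext1Z_of_projective [Module.Projective R X] : Ext1Z R X N := by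
  intro B C _ _ _ _ f g hfg φ
  obtain ⟨m, hm⟩ := Module.projective_lifting_property g φ hfg.surj
  exact ⟨m, fun x => LinearMap.congr_fun hm x⟩

lemma ext1Z_injective (hN : Module.Injective R N) : Ext1Z R X N := by
  intro B C _ _ _ _ f g hfg φ
  obtain ⟨r, hr⟩ := inj_ext hN hfg.inj LinearMap.id
  obtain ⟨t, ht⟩ := hfg.desc (LinearMap.id - f ∘ₗ r) (fun a => by simp [hr])
  refine ⟨t ∘ₗ φ, fun x => ?_⟩
  obtain ⟨b, hb⟩ := hfg.surj (φ x)
  rw [LinearMap.comp_apply, ← hb, ht]; simp [hfg.zero]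

/-- retracts in the second variable -/
lemma Ext1Z.retract (h : Ext1Z R X B) (i : A →ₗ[R] B) (r : B →ₗ[R] A) (hr : ∀ a, r (i a) = a) :
    Ext1Z R X A := by
  obtain ⟨J, _, _, D, _, _, j, p, hJ, hip⟩ := exists_inj (R := R) A
  obtain ⟨J', _, _, D', _, _, j', p', hJ', hip'⟩ := exists_inj (R := R) B
  refine ext1Z_of_inj hJ hip fun φ => ?_
  obtain ⟨e, he⟩ := inj_ext hJ' hip.inj (j' ∘ₗ i)
  obtain ⟨s, hs⟩ := inj_ext hJ hip'.inj (j ∘ₗ r)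
  obtain ⟨e', he'⟩ := hip.desc (p' ∘ₗ e) (fun a => by simp [he, hip'.zero])
  obtain ⟨s', hs'⟩ := hip'.desc (p ∘ₗ s) (fun a => by simp [hs, hip.zero])
  obtain ⟨k, hk⟩ := h _ _ j' p' hip' (e' ∘ₗ φ)
  -- s' e' - 1 on D lifts
  obtain ⟨t, ht⟩ := hip.desc (s ∘ₗ e - LinearMap.id) (fun a => by simp [he, hs, hr])
  refine ⟨s ∘ₗ k - t ∘ₗ φ, fun x => ?_⟩
  obtain ⟨y, hy⟩ := hip.surj (φ x)
  have h1 : p (s (k x)) = s' (e' (φ x)) := by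
    rw [← LinearMap.comp_apply p s, ← hs', hk]; rfl
  have h2 : s' (e' (φ x)) = p (s (e y)) := by
    rw [← hy, he', LinearMap.comp_apply, hs']; rfl
  rw [LinearMap.sub_apply, map_sub, LinearMap.comp_apply, LinearMap.comp_apply, h1, h2, ← hy, ht]
  simp

/-- retracts in the first variable -/
lemma Ext1Z.retract_left (h : Ext1Z R B N) (i : A →ₗ[R] B) (r : B →ₗ[R] A)
    (hr : ∀ a, r (i a) = a) : Ext1Z R A N := by
  intro Y Z _ _ _ _ f g hfg φ
  obtain ⟨k, hk⟩ := h _ _ f g hfg (φ ∘ₗ r)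
  exact ⟨k ∘ₗ i, fun x => by simp [hk, hr]⟩

end Basics

end GidAux

namespace GidAux

section GI

/-- classes of modules closed under Gorenstein-type left and right steps. -/
def GIClass (R : Type u) [CommRing R]
    (P : ∀ (N : Type u) [AddCommGroup N] [Module R N], Prop) : Prop :=
  ∀ (N : Type u) [AddCommGroup N] [Module R N], P N →
    (∀ (E : Type u) [AddCommGroup E] [Module R E], Module.Injective R E → Ext1Z R E N) ∧
    (∃ (K : Type u) (_ : AddCommGroup K) (_ : Module R K) (I : Type u) (_ : AddCommGroup I)
      (_ : Module R I) (f : K →ₗ[R] I) (g : I →ₗ[R] N), Module.Injective R I ∧ SES f g ∧ P K) ∧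
    (∃ (J : Type u) (_ : AddCommGroup J) (_ : Module R J) (C : Type u) (_ : AddCommGroup C)
      (_ : Module R C) (f : N →ₗ[R] J) (g : J →ₗ[R] C), Module.Injective R J ∧ SES f g ∧ P C)

/-- coinductive form of Gorenstein injectivity. -/
def GI (R : Type u) [CommRing R] (N : Type u) [AddCommGroup N] [Module R N] : Prop :=
  ∃ P : ∀ (N : Type u) [AddCommGroup N] [Module R N], Prop, GIClass R P ∧ P N

variable {R : Type u} [CommRing R]

lemma giClass_GI : GIClass R (fun N _ _ => GI R N) := by
  rintro N _ _ ⟨P, hP, hN⟩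
  obtain ⟨h1, ⟨K, _, _, I, _, _, f, g, hI, hs, hK⟩, ⟨J, _, _, C, _, _, f', g', hJ, hs', hC⟩⟩ :=
    hP N hN
  exact ⟨h1, ⟨K, _, _, I, _, _, f, g, hI, hs, ⟨P, hP, hK⟩⟩,
    ⟨J, _, _, C, _, _, f', g', hJ, hs', ⟨P, hP, hC⟩⟩⟩

lemma injective_prod {A B : Type u} [AddCommGroup A] [AddCommGroup B] [Module R A] [Module R B]
    (hA : Module.Injective R A) (hB : Module.Injective R B) : Module.Injective R (A × B) where
  out X Y _ _ _ _ f hf g := by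
    obtain ⟨a, ha⟩ := hA.out f hf (LinearMap.fst R A B ∘ₗ g)
    obtain ⟨b, hb⟩ := hB.out f hf (LinearMap.snd R A B ∘ₗ g)
    exact ⟨a.prod b, fun x => Prod.ext (ha x) (hb x)⟩

lemma injective_retract {A B : Type u} [AddCommGroup A] [AddCommGroup B] [Module R A]
    [Module R B] (hB : Module.Injective R B) (i : A →ₗ[R] B) (r : B →ₗ[R] A)
    (hr : ∀ a, r (i a) = a) : Module.Injective R A where
  out X Y _ _ _ _ f hf g := by
    obtain ⟨b, hb⟩ := hB.out f hf (i ∘ₗ g)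
    exact ⟨r ∘ₗ b, fun x => by simp [hb, hr]⟩

lemma injective_punit : Module.Injective R PUnit.{u+1} where
  out _ _ _ _ _ _ _ _ _ := ⟨0, fun _ => rfl⟩

variable {A B C : Type u} [AddCommGroup A] [AddCommGroup B] [AddCommGroup C]
    [Module R A] [Module R B] [Module R C]

lemma GI.of_injective (hA : Module.Injective R A) : GI R A := by
  refine ⟨fun N _ _ => Module.Injective R N, ?_, hA⟩
  intro N _ _ hN
  refine ⟨fun E _ _ _ => ext1Z_injective hN, ⟨PUnit, _, _, N, _, _, 0, LinearMap.id, hN, ?_,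
    injective_punit⟩, ⟨N, _, _, PUnit, _, _, LinearMap.id, 0, hN, ?_, injective_punit⟩⟩
  · refine ⟨fun a b _ => rfl, fun b => ?_, fun x => ⟨x, rfl⟩⟩
    constructor
    · intro h; exact ⟨0, by simpa using h.symm⟩
    · rintro ⟨a, rfl⟩; simp
  · exact ⟨fun a b h => h, fun b => ⟨fun _ => ⟨b, rfl⟩, fun _ => rfl⟩, fun x => ⟨0, rfl⟩⟩

/-- extension closure -/
lemma GI.ext {f : A →ₗ[R] B} {g : B →ₗ[R] C} (hs : SES f g) (hA : GI R A) (hC : GI R C) :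
    GI R B := by
  refine ⟨fun N _ _ => ∃ (A : Type u) (_ : AddCommGroup A) (_ : Module R A) (C : Type u)
    (_ : AddCommGroup C) (_ : Module R C) (f : A →ₗ[R] N) (g : N →ₗ[R] C), SES f g ∧ GI R A ∧
    GI R C, ?_, A, _, _, C, _, _, f, g, hs, hA, hC⟩
  clear hs hA hC f g
  rintro N _ _ ⟨A, _, _, C, _, _, f, g, hs, hA, hC⟩
  obtain ⟨eA, ⟨KA, _, _, IA, _, _, iA, pA, hIA, sA, hKA⟩, ⟨JA, _, _, DA, _, _, jA, qA, hJA, tA,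
    hDA⟩⟩ := giClass_GI A hA
  obtain ⟨eC, ⟨KC, _, _, IC, _, _, iC, pC, hIC, sC, hKC⟩, ⟨JC, _, _, DC, _, _, jC, qC, hJC, tC,
    hDC⟩⟩ := giClass_GI C hC
  refine ⟨fun E _ _ hE => Ext1Z.middle hs (eA E hE) (eC E hE), ?_, ?_⟩
  · obtain ⟨l, hl⟩ := eA IC hIC _ _ f g hs pC
    set p : IA × IC →ₗ[R] N := LinearMap.coprod (f ∘ₗ pA) l with hp
    have hpx : ∀ x y, p (x, y) = f (pA x) + l y := fun x y => by simp [hp]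
    have hsurj : Function.Surjective p := by
      intro n
      obtain ⟨y, hy⟩ := sC.surj (g n)
      have : g (n - l y) = 0 := by rw [map_sub, hl, hy, sub_self]
      obtain ⟨a, ha⟩ := (hs.exact _).1 this
      obtain ⟨x, rfl⟩ := sA.surj a
      exact ⟨(x, y), by rw [hpx, ha]; abel⟩
    have hK := SES.ker_subtype hsurj
    refine ⟨LinearMap.ker p, _, _, IA × IC, _, _, _, p, injective_prod hIA hIC, hK, ?_⟩
    obtain ⟨a, ha⟩ := hK.lift (LinearMap.inl R IA IC ∘ₗ iA) (fun x => by
      simp [hpx, sA.zero])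
    obtain ⟨c, hc⟩ := sC.lift (LinearMap.snd R IA IC ∘ₗ (LinearMap.ker p).subtype) (fun x => by
      obtain ⟨⟨x, y⟩, hxy⟩ := x
      rw [LinearMap.mem_ker, hpx] at hxy
      have := congrArg g hxy
      rw [map_add, hs.zero, hl, zero_add, map_zero] at this
      simpa using this)
    refine ⟨KA, _, _, KC, _, _, a, c, ⟨?_, ?_, ?_⟩, hKA, hKC⟩
    · intro x y hxy
      have := ha x
      rw [hxy, ha y] at this
      exact sA.inj (Prod.ext_iff.1 this).1.symm
    · intro x
      rw [← (map_eq_zero_iff iC sC.inj), hc]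
      constructor
      · intro h
        obtain ⟨⟨x, y⟩, hxy⟩ := x
        have hy : y = 0 := by simpa using h
        subst hy
        rw [LinearMap.mem_ker, hpx, map_zero, add_zero] at hxy
        have := hs.inj (hxy.trans (map_zero f).symm)
        obtain ⟨k, hk⟩ := (sA.exact _).1 this
        exact ⟨k, Subtype.ext (by have := ha k; simp only [Submodule.subtype_apply] at this
                                  rw [this]; simp [hk])⟩
      · rintro ⟨k, rfl⟩
        rw [LinearMap.comp_apply, ha]; simp
    · intro k
      have : g (l (iC k)) = 0 := by rw [hl, sC.zero]
      obtain ⟨y, hy⟩ := (hs.exact _).1 this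
      obtain ⟨x, rfl⟩ := sA.surj y
      refine ⟨⟨(-x, iC k), by rw [LinearMap.mem_ker, hpx]; simp [hy]⟩, sC.inj ?_⟩
      rw [hc]; simp
  · obtain ⟨e, he⟩ := inj_ext hJA hs.inj jA
    set i : N →ₗ[R] JA × JC := e.prod (jC ∘ₗ g) with hi
    have hix : ∀ n, i n = (e n, jC (g n)) := fun n => rfl
    have hinj : Function.Injective i := by
      rw [injective_iff_map_eq_zero]
      intro n hn
      rw [hix, Prod.mk_eq_zero] at hn
      have := tC.inj (hn.2.trans (map_zero jC).symm)
      obtain ⟨a, rfl⟩ := (hs.exact _).1 this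
      rw [he] at hn
      rw [tA.inj (hn.1.trans (map_zero jA).symm), map_zero]
    have hQ := SES.range_mkQ hinj
    set q := (LinearMap.range i).mkQ
    refine ⟨JA × JC, _, _, _, _, _, i, q, injective_prod hJA hJC, hQ, ?_⟩
    obtain ⟨a, ha⟩ := tA.desc (q ∘ₗ LinearMap.inl R JA JC) (fun x => by
      refine (hQ.exact _).2 ⟨f x, ?_⟩
      rw [hix, he, hs.zero, map_zero]; rfl)
    obtain ⟨c, hc⟩ := hQ.desc (qC ∘ₗ LinearMap.snd R JA JC) (fun x => by simp [hix, tC.zero])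
    refine ⟨DA, _, _, DC, _, _, a, c, ⟨?_, ?_, ?_⟩, hDA, hDC⟩
    · rw [injective_iff_map_eq_zero]
      intro x hx
      obtain ⟨y, rfl⟩ := tA.surj x
      rw [ha] at hx
      obtain ⟨n, hn⟩ := (hQ.exact _).1 hx
      rw [hix] at hn
      obtain ⟨h1, h2⟩ := Prod.ext_iff.1 hn
      simp only [LinearMap.inl_apply] at h1 h2
      have := tC.inj (h2.trans (map_zero jC).symm)
      obtain ⟨a, rfl⟩ := (hs.exact _).1 this
      rw [he] at h1
      rw [← h1, tA.zero]
    · intro x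
      obtain ⟨⟨x, y⟩, rfl⟩ := hQ.surj x
      rw [hc]
      constructor
      · intro h
        obtain ⟨z, hz⟩ := (tC.exact _).1 h
        obtain ⟨n, rfl⟩ := hs.surj z
        refine ⟨qA (x - e n), ?_⟩
        rw [ha, LinearMap.comp_apply, ← sub_eq_zero, ← map_sub]
        refine (hQ.exact _).2 ⟨- n, ?_⟩
        rw [hix]
        simp only [LinearMap.snd_apply] at hz
        simp [hz]
      · rintro ⟨k, hk⟩
        obtain ⟨z, rfl⟩ := tA.surj k
        rw [ha, LinearMap.comp_apply, ← sub_eq_zero, ← map_sub] at hk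
        obtain ⟨n, hn⟩ := (hQ.exact _).1 hk
        have h2 := (Prod.ext_iff.1 hn).2
        simp [hix] at h2
        simp only [LinearMap.comp_apply, LinearMap.snd_apply]
        rw [← neg_eq_zero, ← map_neg, ← h2, tC.zero]
    · intro k
      obtain ⟨y, rfl⟩ := tC.surj k
      exact ⟨q (0, y), by rw [hc]; rfl⟩

/-- retract closure -/
lemma GI.retract (hB : GI R B) (i : A →ₗ[R] B) (r : B →ₗ[R] A) (hr : ∀ a, r (i a) = a) :
    GI R A := by
  refine ⟨fun N _ _ => ∃ (G : Type u) (_ : AddCommGroup G) (_ : Module R G)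
    (i : N →ₗ[R] G) (r : G →ₗ[R] N), (∀ a, r (i a) = a) ∧ GI R G, ?_, B, _, _, i, r, hr, hB⟩
  clear hr hB i r
  rintro N _ _ ⟨G, _, _, i, r, hr, hG⟩
  obtain ⟨e, ⟨K, _, _, I, _, _, f, p, hI, s, hK⟩, ⟨J, _, _, D, _, _, j, q, hJ, t,
    hD⟩⟩ := giClass_GI G hG
  refine ⟨fun E _ _ hE => (e E hE).retract i r hr, ?_, ?_⟩
  · have hsurj : Function.Surjective (r ∘ₗ p) := by
      intro n
      obtain ⟨x, hx⟩ := s.surj (i n)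
      exact ⟨x, by simp [hx, hr]⟩
    have hs := SES.ker_subtype hsurj
    refine ⟨_, _, _, I, _, _, _, _, hI, hs, ?_⟩
    obtain ⟨k, hk⟩ := hs.lift f (fun x => by simp [s.zero])
    have key : SES (k.prod (0 : K →ₗ[R] N))
        (LinearMap.coprod (p ∘ₗ (LinearMap.ker (r ∘ₗ p)).subtype) i) := by
      refine ⟨?_, ?_, ?_⟩
      · intro x y hxy
        have h1 := (Prod.ext_iff.1 hxy).1
        simp only [LinearMap.prod_apply, Function.prod_apply] at h1
        apply s.inj
        rw [← hk, h1, hk]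
      · rintro ⟨x, n⟩
        simp only [LinearMap.coprod_apply, LinearMap.comp_apply]
        constructor
        · intro h
          have h2 := congrArg r h
          have h3 : r (p ((LinearMap.ker (r ∘ₗ p)).subtype x)) = 0 := x.2
          rw [map_add, h3, hr, zero_add, map_zero] at h2
          subst h2
          rw [map_zero, add_zero] at h
          obtain ⟨y, hy⟩ := (s.exact _).1 h
          refine ⟨y, Prod.ext (Subtype.val_injective ?_) rfl⟩
          exact (hk y).trans hy
        · rintro ⟨y, hy⟩
          obtain ⟨h1, h2⟩ := Prod.ext_iff.1 hy
          simp only [LinearMap.prod_apply, Function.prod_apply, LinearMap.zero_apply] at h1 h2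
          rw [← h1, ← h2, hk, s.zero]; simp
      · intro y
        obtain ⟨x, hx⟩ := s.surj (y - i (r y))
        refine ⟨(⟨x, by simp [hx, hr]⟩, r y), ?_⟩
        simp [hx]
    exact ⟨_, _, _, LinearMap.inl R _ N, LinearMap.fst R _ N, fun _ => rfl, GI.ext key hK hG⟩
  · have hinj : Function.Injective (j ∘ₗ i) :=
      t.inj.comp (Function.LeftInverse.injective hr)
    have hs := SES.range_mkQ hinj
    set q' := (LinearMap.range (j ∘ₗ i)).mkQ
    refine ⟨J, _, _, _, _, _, _, _, hJ, hs, ?_⟩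
    obtain ⟨c, hc⟩ := hs.desc q (fun x => by simp [t.zero])
    have key : SES ((q' ∘ₗ j).prod r) (c ∘ₗ LinearMap.fst R _ N) := by
      refine ⟨?_, ?_, ?_⟩
      · rw [injective_iff_map_eq_zero]
        intro x hx
        obtain ⟨h1, h2⟩ := Prod.ext_iff.1 hx
        obtain ⟨n, hn⟩ := (hs.exact _).1 h1
        have h3 := t.inj hn
        subst h3
        have h4 : n = 0 := (hr n).symm.trans h2
        rw [h4, map_zero]
      · rintro ⟨x, n⟩
        obtain ⟨y, rfl⟩ := hs.surj x
        rw [LinearMap.comp_apply, LinearMap.fst_apply, hc, t.exact]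
        constructor
        · rintro ⟨g, rfl⟩
          refine ⟨g + i (n - r g), Prod.ext ?_ ?_⟩
          · have : q' (j (i (n - r g))) = 0 := hs.zero _
            change q' (j (g + i (n - r g))) = q' (j g)
            rw [map_add, map_add, this, add_zero]
          · simp [hr]
        · rintro ⟨g, hg⟩
          have h1 := (Prod.ext_iff.1 hg).1
          simp only [LinearMap.prod_apply, Function.prod_apply, LinearMap.comp_apply] at h1
          rw [← sub_eq_zero, ← map_sub] at h1
          obtain ⟨n', hn'⟩ := (hs.exact _).1 h1
          exact ⟨g - i n', by rw [map_sub]; rw [LinearMap.comp_apply] at hn'; rw [hn']; abel⟩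
      · intro d
        obtain ⟨y, rfl⟩ := t.surj d
        exact ⟨(q' y, 0), hc y⟩
    exact ⟨_, _, _, LinearMap.inl R _ N, LinearMap.fst R _ N, fun _ => rfl, GI.ext key hG hD⟩

lemma GI.of_equiv (hB : GI R B) (e : A ≃ₗ[R] B) : GI R A :=
  hB.retract e.toLinearMap e.symm.toLinearMap (by simp)

/-- cokernel closure -/
lemma GI.coker {f : A →ₗ[R] B} {g : B →ₗ[R] C} (hs : SES f g) (hA : GI R A) (hB : GI R B) :
    GI R C := by
  obtain ⟨-, -, ⟨J, _, _, D, _, _, j, q, hJ, t, hD⟩⟩ := giClass_GI A hA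
  obtain ⟨e, he⟩ := inj_ext hJ hs.inj j
  obtain ⟨c, hc⟩ := hs.desc (q ∘ₗ e) (fun a => by simp [he, t.zero])
  have key : SES (e.prod g) (LinearMap.coprod q (-c)) := by
    refine ⟨?_, ?_, ?_⟩
    · rw [injective_iff_map_eq_zero]
      intro x hx
      obtain ⟨h1, h2⟩ := Prod.ext_iff.1 hx
      obtain ⟨a, rfl⟩ := (hs.exact _).1 h2
      have h3 : j a = 0 := (he a).symm.trans h1
      rw [t.inj (h3.trans (map_zero j).symm), map_zero]
    · rintro ⟨x, y⟩
      obtain ⟨b, rfl⟩ := hs.surj y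
      have : (LinearMap.coprod q (-c)) (x, g b) = q (x - e b) := by
        simp [hc, sub_eq_add_neg]
      rw [this, t.exact]
      constructor
      · rintro ⟨a, ha⟩
        exact ⟨b + f a, Prod.ext (by simp [he, ha]) (by simp [hs.zero])⟩
      · rintro ⟨b', hb'⟩
        obtain ⟨h1, h2⟩ := Prod.ext_iff.1 hb'
        simp only [LinearMap.prod_apply, Function.prod_apply] at h1 h2
        rw [← sub_eq_zero, ← map_sub] at h2
        obtain ⟨a, ha⟩ := (hs.exact _).1 h2
        exact ⟨a, by rw [← he, ha, map_sub, h1]⟩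
    · intro d
      obtain ⟨x, rfl⟩ := t.surj d
      exact ⟨(x, 0), by simp⟩
  exact (GI.ext key hB hD).retract (LinearMap.inr R J C) (LinearMap.snd R J C) (fun _ => rfl)

end GI

end GidAux

namespace GidAux

section Witness

variable {R : Type u} [CommRing R]

/-- a witness from spliced short exact sequences -/
lemma isGorensteinInjective_of_splice (Z I : ℤ → ModuleCat.{u} R)
    (ι : ∀ i, Z i →ₗ[R] I i) (π : ∀ i, I (i + 1) →ₗ[R] Z i)
    (hI : ∀ i, Module.Injective R (I i)) (hs : ∀ i, SES (ι (i + 1)) (π i))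
    (hE : ∀ (E : Type u) [AddCommGroup E] [Module R E], Module.Injective R E →
      ∀ i, Ext1Z R E (Z i)) : IsGorensteinInjective R (Z (-1 + 1)) := by
  have hι : ∀ i, Function.Injective (ι i) := by
    intro i
    obtain ⟨j, rfl⟩ : ∃ j, i = j + 1 := ⟨i - 1, by ring⟩
    exact (hs j).inj
  have hker : ∀ i x, (ι i ∘ₗ π i) x = 0 ↔ π i x = 0 := fun i x =>
    map_eq_zero_iff (ι i) (hι i)
  refine ⟨{
    I := fun i => I i
    inj := hI
    d := fun i => ι i ∘ₗ π i
    d_comp_d := ?_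
    exact := ?_
    hom_exact := ?_
    ker_iso := ?_ }⟩
  · intro i
    ext x
    simp [(hs i).zero]
  · intro i
    ext x
    rw [LinearMap.mem_ker, hker, (hs i).exact, LinearMap.mem_range]
    constructor
    · rintro ⟨a, rfl⟩
      obtain ⟨y, rfl⟩ := (hs (i + 1)).surj a
      exact ⟨y, rfl⟩
    · rintro ⟨y, rfl⟩
      exact ⟨_, rfl⟩
  · intro E _ _ hEi i f hf
    obtain ⟨l, hl⟩ := (hs i).lift f (fun x => (hker i _).1 (LinearMap.congr_fun hf x))
    obtain ⟨k, hk⟩ := hE E hEi (i + 1 + 1) _ _ _ _ (hs (i + 1)) l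
    refine ⟨k, LinearMap.ext fun x => ?_⟩
    simp [hk, hl]
  · have h1 : ∀ z, ι (-1 + 1) z ∈ LinearMap.ker (ι (-1) ∘ₗ π (-1)) := by
      intro z
      rw [LinearMap.mem_ker, hker, (hs (-1)).zero]
    refine ⟨LinearEquiv.ofBijective ((ι (-1 + 1)).codRestrict _ h1) ⟨?_, ?_⟩⟩
    · intro x y hxy
      exact hι _ (congrArg Subtype.val hxy)
    · rintro ⟨x, hx⟩
      rw [LinearMap.mem_ker, hker, (hs (-1)).exact] at hx
      obtain ⟨a, ha⟩ := hx
      exact ⟨a, Subtype.ext ha⟩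

lemma GI.isGorensteinInjective {N : Type u} [AddCommGroup N] [Module R N] (h : GI R N) :
    IsGorensteinInjective R N := by
  let T := {N : ModuleCat.{u} R // GI R N}
  have hL : ∀ t : T, ∃ (K : T) (I : ModuleCat.{u} R) (f : K.1 →ₗ[R] I) (g : I →ₗ[R] t.1),
      Module.Injective R I ∧ SES f g := by
    rintro ⟨N, hN⟩
    obtain ⟨-, ⟨K, _, _, I, _, _, f, g, hI, hs, hK⟩, -⟩ := giClass_GI N hN
    exact ⟨⟨ModuleCat.of R K, hK⟩, ModuleCat.of R I, f, g, hI, hs⟩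
  have hR : ∀ t : T, ∃ (C : T) (J : ModuleCat.{u} R) (f : t.1 →ₗ[R] J) (g : J →ₗ[R] C.1),
      Module.Injective R J ∧ SES f g := by
    rintro ⟨N, hN⟩
    obtain ⟨-, -, ⟨K, _, _, I, _, _, f, g, hI, hs, hK⟩⟩ := giClass_GI N hN
    exact ⟨⟨ModuleCat.of R I, hK⟩, ModuleCat.of R K, f, g, hI, hs⟩
  choose lK lI lf lg lInj lS using hL
  choose rC rJ rf rg rInj rS using hR
  let t0 : T := ⟨ModuleCat.of R N, h⟩
  let zL : ℕ → T := fun n => Nat.rec t0 (fun _ t => lK t) n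
  let zR : ℕ → T := fun n => Nat.rec t0 (fun _ t => rC t) n
  let Z : ℤ → T := fun i => match i with
    | Int.ofNat n => zL n
    | Int.negSucc n => zR (n + 1)
  let I : ℤ → ModuleCat.{u} R := fun i => match i with
    | Int.ofNat 0 => rJ (zR 0)
    | Int.ofNat (n + 1) => lI (zL n)
    | Int.negSucc n => rJ (zR (n + 1))
  let ι : ∀ i, (Z i).1 →ₗ[R] I i := fun i => match i with
    | Int.ofNat 0 => rf (zR 0)
    | Int.ofNat (n + 1) => lf (zL n)
    | Int.negSucc n => rf (zR (n + 1))
  let π : ∀ i, I (i + 1) →ₗ[R] (Z i).1 := fun i => match i with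
    | Int.ofNat n => lg (zL n)
    | Int.negSucc 0 => rg (zR 0)
    | Int.negSucc (n + 1) => rg (zR (n + 1))
  refine isGorensteinInjective_of_splice (fun i => (Z i).1) I ι π ?_ ?_ ?_
  · intro i
    match i with
    | Int.ofNat 0 => exact rInj _
    | Int.ofNat (n + 1) => exact lInj _
    | Int.negSucc n => exact rInj _
  · intro i
    match i with
    | Int.ofNat n => exact lS _
    | Int.negSucc 0 => exact rS _
    | Int.negSucc (n + 1) => exact rS _
  · intro E _ _ hE i
    exact (giClass_GI _ (Z i).2).1 E hE

lemma GI.of_isGorensteinInjective {N : Type u} [AddCommGroup N] [Module R N]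
    (h : IsGorensteinInjective R N) : GI R N := by
  obtain ⟨W⟩ := h
  let _ := W.acg
  let _ := W.mod
  have hcod : ∀ i x, W.d (i + 1) x ∈ LinearMap.ker (W.d i) := fun i x => by
    rw [W.exact]; exact ⟨x, rfl⟩
  have hs : ∀ i, SES (LinearMap.ker (W.d (i + 1))).subtype
      ((W.d (i + 1)).codRestrict (LinearMap.ker (W.d i)) (hcod i)) := by
    intro i
    refine ⟨Subtype.val_injective, ?_, ?_⟩
    · intro b
      rw [Subtype.ext_iff]
      constructor
      · intro h; exact ⟨⟨b, h⟩, rfl⟩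
      · rintro ⟨a, rfl⟩; exact a.2
    · rintro ⟨x, hx⟩
      have hx' := hx
      rw [W.exact] at hx'
      obtain ⟨y, hy⟩ := hx'
      exact ⟨y, Subtype.ext hy⟩
  have hE : ∀ (E : Type u) [AddCommGroup E] [Module R E], Module.Injective R E → ∀ i,
      Ext1Z R E (LinearMap.ker (W.d (i + 1))) := by
    intro E _ _ hEi i
    refine ext1Z_of_inj (W.inj _) (hs i) fun φ => ?_
    obtain ⟨g, hg⟩ := W.hom_exact E hEi i ((LinearMap.ker (W.d i)).subtype ∘ₗ φ)
      (LinearMap.ext fun x => (φ x).2)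
    exact ⟨g, fun x => Subtype.ext (LinearMap.congr_fun hg x)⟩
  refine ⟨fun N _ _ => ∃ i, Nonempty (N ≃ₗ[R] LinearMap.ker (W.d i)), ?_, -1, W.ker_iso⟩
  rintro N _ _ ⟨i, ⟨e⟩⟩
  obtain ⟨j, rfl⟩ : ∃ j, i = j + 1 := ⟨i - 1, by ring⟩
  refine ⟨fun E _ _ hEi => (hE E hEi j).retract e.toLinearMap e.symm.toLinearMap (by simp), ?_, ?_⟩
  · refine ⟨LinearMap.ker (W.d (j + 1 + 1)), _, _, W.I (j + 1 + 1 + 1), _, _,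
      (LinearMap.ker (W.d (j + 1 + 1))).subtype,
      e.symm.toLinearMap ∘ₗ (W.d (j + 1 + 1)).codRestrict _ (hcod (j + 1)), W.inj _, ?_,
      j + 1 + 1, ⟨LinearEquiv.refl _ _⟩⟩
    · refine ⟨(hs (j + 1)).inj, fun b => ?_, e.symm.surjective.comp (hs (j + 1)).surj⟩
      rw [← (hs (j + 1)).exact]
      simp
  · refine ⟨W.I (j + 1 + 1), _, _, LinearMap.ker (W.d j), _, _,
      (LinearMap.ker (W.d (j + 1))).subtype ∘ₗ e.toLinearMap,
      (W.d (j + 1)).codRestrict _ (hcod j), W.inj _, ?_,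
      j, ⟨LinearEquiv.refl _ _⟩⟩
    · refine ⟨(hs j).inj.comp e.injective, fun b => ?_, (hs j).surj⟩
      rw [(hs j).exact]
      constructor
      · rintro ⟨a, rfl⟩; exact ⟨e.symm a, by simp⟩
      · rintro ⟨a, rfl⟩; exact ⟨e a, rfl⟩

end Witness

section GLE

/-- inductive version of `Gid ≤ n` -/
def GLE (R : Type u) [CommRing R] : ℕ → ∀ (N : Type u) [AddCommGroup N] [Module R N], Prop
  | 0, N, _, _ => GI R N
  | n + 1, N, _, _ => ∃ (J : Type u) (_ : AddCommGroup J) (_ : Module R J) (C : Type u)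
      (_ : AddCommGroup C) (_ : Module R C) (f : N →ₗ[R] J) (g : J →ₗ[R] C), GI R J ∧ SES f g ∧
      GLE R n C

variable {R : Type u} [CommRing R]

lemma GLE.witness (n : ℕ) : ∀ (N : Type u) [AddCommGroup N] [Module R N], GLE R n N →
    Nonempty (GidWitness R N n) := by
  induction n with
  | zero =>
    intro N _ _ h
    refine ⟨{
      J := fun i => match i with
        | 0 => N
        | _ + 1 => PUnit
      acg := fun i => match i with
        | 0 => inferInstance
        | _ + 1 => inferInstance
      mod := fun i => match i with
        | 0 => inferInstance
        | _ + 1 => inferInstance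
      gi := ?_
      triv := ?_
      ε := LinearMap.id
      ε_inj := fun _ _ h => h
      d := fun i => 0
      exact_zero := ?_
      exact := ?_ }⟩
    · intro i hi
      obtain rfl : i = 0 := by omega
      exact GI.isGorensteinInjective h
    · intro i hi
      match i with
      | 0 => omega
      | _ + 1 => exact inferInstanceAs (Subsingleton PUnit)
    · ext x
      exact ⟨fun _ => ⟨x, rfl⟩, fun _ => rfl⟩
    · intro i
      ext x
      refine ⟨fun _ => ⟨?_, ?_⟩, fun _ => rfl⟩
      · match i with
        | 0 => exact (0 : N)
        | _ + 1 => exact PUnit.unit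
      · exact Subsingleton.elim (α := PUnit) _ _
  | succ n ih =>
    rintro N _ _ ⟨J, _, _, C, _, _, f, g, hJ, hs, hC⟩
    obtain ⟨W⟩ := ih C hC
    let _ := W.acg
    let _ := W.mod
    refine ⟨{
      J := fun i => match i with
        | 0 => J
        | i + 1 => W.J i
      acg := fun i => match i with
        | 0 => inferInstance
        | i + 1 => W.acg i
      mod := fun i => match i with
        | 0 => inferInstance
        | i + 1 => W.mod i
      gi := ?_
      triv := ?_
      ε := f
      ε_inj := hs.inj
      d := fun i => match i with
        | 0 => W.ε ∘ₗ g
        | i + 1 => W.d i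
      exact_zero := ?_
      exact := ?_ }⟩
    · intro i hi
      match i with
      | 0 => exact GI.isGorensteinInjective hJ
      | i + 1 => exact W.gi i (by omega)
    · intro i hi
      match i with
      | 0 => omega
      | i + 1 => exact W.triv i (by omega)
    · ext x
      refine Iff.trans ?_ (hs.exact x)
      exact map_eq_zero_iff W.ε W.ε_inj
    · intro i
      match i with
      | 0 =>
        refine W.exact_zero.trans ?_
        ext x
        constructor
        · rintro ⟨c, rfl⟩
          obtain ⟨y, rfl⟩ := hs.surj c
          exact ⟨y, rfl⟩
        · rintro ⟨y, rfl⟩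
          exact ⟨_, rfl⟩
      | i + 1 => exact W.exact i

lemma GLE.of_witness (n : ℕ) : ∀ (N : Type u) [AddCommGroup N] [Module R N],
    Nonempty (GidWitness R N n) → GLE R n N := by
  induction n with
  | zero =>
    rintro N _ _ ⟨W⟩
    let _ := W.acg
    let _ := W.mod
    have h0 : GI R (W.J 0) := GI.of_isGorensteinInjective (W.gi 0 le_rfl)
    refine h0.of_equiv (LinearEquiv.ofBijective W.ε ⟨W.ε_inj, fun x => ?_⟩)
    have h1 : x ∈ LinearMap.ker (W.d 0) := by
      have := W.triv 1 (by omega)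
      exact Subsingleton.elim (α := W.J 1) _ _
    rw [W.exact_zero] at h1
    exact h1
  | succ n ih =>
    rintro N _ _ ⟨W⟩
    let _ := W.acg
    let _ := W.mod
    have hs := SES.range_mkQ W.ε_inj
    obtain ⟨e, he⟩ := hs.desc (W.d 0) (fun a => by
      have : W.ε a ∈ LinearMap.ker (W.d 0) := by rw [W.exact_zero]; exact ⟨a, rfl⟩
      exact this)
    refine ⟨W.J 0, _, _, _, _, _, W.ε, _, GI.of_isGorensteinInjective (W.gi 0 (by omega)), hs,
      ih _ ⟨{
        J := fun i => W.J (i + 1)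
        gi := fun i hi => W.gi _ (by omega)
        triv := fun i hi => W.triv _ (by omega)
        ε := e
        ε_inj := ?_
        d := fun i => W.d (i + 1)
        exact_zero := ?_
        exact := fun i => W.exact _ }⟩⟩
    · rw [injective_iff_map_eq_zero]
      intro x hx
      obtain ⟨y, rfl⟩ := hs.surj x
      rw [he] at hx
      have : y ∈ LinearMap.ker (W.d 0) := hx
      rw [W.exact_zero] at this
      exact (hs.exact _).2 this
    · rw [W.exact]
      ext x
      constructor
      · rintro ⟨y, rfl⟩
        exact ⟨_, he y⟩
      · rintro ⟨z, rfl⟩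
        obtain ⟨y, rfl⟩ := hs.surj z
        exact ⟨y, (he y).symm⟩

/-- quotient by a Gorenstein injective submodule -/
lemma GLE.quot (n : ℕ) {A B C : Type u} [AddCommGroup A] [AddCommGroup B] [AddCommGroup C]
    [Module R A] [Module R B] [Module R C] {f : A →ₗ[R] B} {g : B →ₗ[R] C} (hs : SES f g)
    (hA : GI R A) (hB : GLE R n B) : GLE R n C := by
  cases n with
  | zero => exact GI.coker hs hA hB
  | succ n =>
    obtain ⟨J, _, _, D, _, _, j, q, hJ, ht, hD⟩ := hB
    have h1 := SES.range_mkQ (R := R) (f := j ∘ₗ f) (ht.inj.comp hs.inj)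
    obtain ⟨c, hc⟩ := hs.desc ((LinearMap.range (j ∘ₗ f)).mkQ ∘ₗ j) (fun a => h1.zero a)
    obtain ⟨d, hd⟩ := h1.desc q (fun a => ht.zero _)
    refine ⟨_, _, _, D, _, _, c, d, GI.coker h1 hA hJ, ⟨?_, ?_, ?_⟩, hD⟩
    · rw [injective_iff_map_eq_zero]
      intro x hx
      obtain ⟨b, rfl⟩ := hs.surj x
      rw [hc] at hx
      obtain ⟨a, ha⟩ := (h1.exact _).1 hx
      rw [← ht.inj ha, hs.zero]
    · intro x
      obtain ⟨y, rfl⟩ := h1.surj x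
      rw [hd, ht.exact]
      constructor
      · rintro ⟨b, rfl⟩; exact ⟨g b, hc b⟩
      · rintro ⟨z, hz⟩
        obtain ⟨b, rfl⟩ := hs.surj z
        rw [hc, LinearMap.comp_apply, ← sub_eq_zero, ← map_sub] at hz
        obtain ⟨a, ha⟩ := (h1.exact _).1 hz
        exact ⟨b - f a, by rw [map_sub]; rw [LinearMap.comp_apply] at ha; rw [ha]; abel⟩
    · intro x
      obtain ⟨j, rfl⟩ := ht.surj x
      exact ⟨_, hd j⟩

lemma GLE.retract (n : ℕ) : ∀ {A B : Type u} [AddCommGroup A] [AddCommGroup B]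
    [Module R A] [Module R B] (e : A ≃ₗ[R] B), GLE R n B → GLE R n A := by
  intro A B _ _ _ _ e h
  cases n with
  | zero => exact GI.of_equiv h e
  | succ n =>
    obtain ⟨J, _, _, D, _, _, j, q, hJ, ht, hD⟩ := h
    refine ⟨J, _, _, D, _, _, j ∘ₗ e.toLinearMap, q, hJ, ⟨ht.inj.comp e.injective, ?_, ht.surj⟩, hD⟩
    intro b
    rw [ht.exact]
    constructor
    · rintro ⟨a, rfl⟩; exact ⟨e.symm a, by simp⟩
    · rintro ⟨a, rfl⟩; exact ⟨e a, rfl⟩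

/-- the first cosyzygy in an injective coresolution -/
lemma GLE.cosyzygy (n : ℕ) {A B C : Type u} [AddCommGroup A] [AddCommGroup B] [AddCommGroup C]
    [Module R A] [Module R B] [Module R C] {f : A →ₗ[R] B} {g : B →ₗ[R] C} (hs : SES f g)
    (hB : Module.Injective R B) (hA : GLE R (n + 1) A) : GLE R n C := by
  obtain ⟨J, _, _, D, _, _, j, q, hJ, ht, hD⟩ := hA
  -- extend `f` along `j`
  obtain ⟨e, he⟩ := inj_ext hB ht.inj f
  obtain ⟨c, hc⟩ := ht.desc (g ∘ₗ e) (fun a => by simp [he, hs.zero])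
  have key : SES (e.prod q) (LinearMap.coprod g (-c)) := by
    refine ⟨?_, ?_, ?_⟩
    · rw [injective_iff_map_eq_zero]
      intro x hx
      obtain ⟨h1, h2⟩ := Prod.ext_iff.1 hx
      obtain ⟨a, rfl⟩ := (ht.exact _).1 h2
      have h3 : f a = 0 := (he a).symm.trans h1
      rw [hs.inj (h3.trans (map_zero f).symm), map_zero]
    · rintro ⟨x, y⟩
      obtain ⟨b, rfl⟩ := ht.surj y
      have : (LinearMap.coprod g (-c)) (x, q b) = g (x - e b) := by
        simp [hc, sub_eq_add_neg]
      rw [this, hs.exact]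
      constructor
      · rintro ⟨a, ha⟩
        exact ⟨b + j a, Prod.ext (by simp [he, ha]) (by simp [ht.zero])⟩
      · rintro ⟨b', hb'⟩
        obtain ⟨h1, h2⟩ := Prod.ext_iff.1 hb'
        simp only [LinearMap.prod_apply, Function.prod_apply] at h1 h2
        rw [← sub_eq_zero, ← map_sub] at h2
        obtain ⟨a, ha⟩ := (ht.exact _).1 h2
        exact ⟨a, by rw [← he, ha, map_sub, h1]⟩
    · intro d
      obtain ⟨x, rfl⟩ := hs.surj d
      exact ⟨(x, 0), by simp⟩
  refine GLE.quot n key hJ ?_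
  -- `B × D` has `GLE n`
  clear key hc c he e
  cases n with
  | zero =>
    refine GI.ext (f := LinearMap.inl R B D) (g := LinearMap.snd R B D) ⟨?_, ?_, ?_⟩
      (GI.of_injective hB) hD
    · exact LinearMap.inl_injective
    · rintro ⟨x, y⟩
      simp [eq_comm]
    · exact LinearMap.snd_surjective
  | succ n =>
    obtain ⟨J', _, _, D', _, _, j', q', hJ', ht', hD'⟩ := hD
    refine ⟨B × J', _, _, D', _, _, LinearMap.id.prodMap j', q' ∘ₗ LinearMap.snd R B J', ?_,
      ⟨?_, ?_, ?_⟩, hD'⟩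
    · refine GI.ext (f := LinearMap.inl R B J') (g := LinearMap.snd R B J') ⟨?_, ?_, ?_⟩
        (GI.of_injective hB) hJ'
      · exact LinearMap.inl_injective
      · rintro ⟨x, y⟩
        simp [eq_comm]
      · exact LinearMap.snd_surjective
    · rintro ⟨x, y⟩ ⟨z, w⟩ h
      simp only [LinearMap.prodMap_apply, Prod.mk.injEq, LinearMap.id_apply] at h
      rw [h.1, ht'.inj h.2]
    · rintro ⟨x, y⟩
      rw [LinearMap.comp_apply, LinearMap.snd_apply, ht'.exact]
      constructor
      · rintro ⟨a, rfl⟩; exact ⟨(x, a), rfl⟩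
      · rintro ⟨⟨z, w⟩, h⟩; exact ⟨w, (Prod.ext_iff.1 h).2⟩
    · exact ht'.surj.comp LinearMap.snd_surjective

end GLE

end GidAux

namespace GidAux

section Flatness

open TensorProduct

variable {R : Type u} [CommRing R]
variable {A B C X Y N : Type u} [AddCommGroup A] [AddCommGroup B] [AddCommGroup C]
    [AddCommGroup X] [AddCommGroup Y] [AddCommGroup N]
    [Module R A] [Module R B] [Module R C] [Module R X] [Module R Y] [Module R N]

lemma exists_free (N : Type u) [AddCommGroup N] [Module R N] :
    ∃ (K : Type u) (_ : AddCommGroup K) (_ : Module R K) (P : Type u) (_ : AddCommGroup P)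
      (_ : Module R P) (f : K →ₗ[R] P) (g : P →ₗ[R] N), Module.Free R P ∧ SES f g :=
  ⟨_, _, _, N →₀ R, _, _, _, Finsupp.linearCombination R id, inferInstance,
    SES.ker_subtype (Finsupp.linearCombination_id_surjective R N)⟩

lemma SES.lTensor {f : A →ₗ[R] B} {g : B →ₗ[R] C} (h : SES f g) (hX : Module.Flat R X) :
    SES (f.lTensor X) (g.lTensor X) where
  inj := Module.Flat.lTensor_preserves_injective_linearMap f h.inj
  exact := lTensor_exact X h.fexact h.surj
  surj := LinearMap.lTensor_surjective X h.surj

/-- a short exact sequence ending in a flat module is universally exact -/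
lemma SES.rTensor {f : A →ₗ[R] B} {g : B →ₗ[R] C} (h : SES f g) (hC : Module.Flat R C)
    (X : Type u) [AddCommGroup X] [Module R X] :
    SES (f.rTensor X) (g.rTensor X) where
  inj := by
    obtain ⟨Q, _, _, L, _, _, i, p, hL, hs⟩ := exists_free (R := R) X
    rw [injective_iff_map_eq_zero]
    intro x hx
    obtain ⟨l, rfl⟩ := LinearMap.lTensor_surjective A hs.surj x
    have comm : ∀ {A B X Y : Type u} [AddCommGroup A] [AddCommGroup B] [AddCommGroup X]
        [AddCommGroup Y] [Module R A] [Module R B] [Module R X] [Module R Y]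
        (f : A →ₗ[R] B) (p : X →ₗ[R] Y) (l : A ⊗[R] X),
        f.rTensor Y (p.lTensor A l) = p.lTensor B (f.rTensor X l) := by
      intro A B X Y _ _ _ _ _ _ _ _ f p l
      rw [← LinearMap.comp_apply, ← LinearMap.comp_apply, LinearMap.rTensor_comp_lTensor,
        LinearMap.lTensor_comp_rTensor]
    rw [comm] at hx
    obtain ⟨q, hq⟩ := ((lTensor_exact B hs.fexact hs.surj) _).1 hx
    have hqC : g.rTensor Q q = 0 := by
      apply Module.Flat.lTensor_preserves_injective_linearMap (M := C) i hs.inj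
      rw [← comm, hq, map_zero, ← LinearMap.comp_apply, ← LinearMap.rTensor_comp, h.comp_zero,
        LinearMap.rTensor_zero, LinearMap.zero_apply]
    obtain ⟨a, rfl⟩ := ((rTensor_exact Q h.fexact h.surj) _).1 hqC
    rw [← comm] at hq
    have := Module.Flat.rTensor_preserves_injective_linearMap (M := L) f h.inj hq
    rw [← this, ← LinearMap.comp_apply, ← LinearMap.lTensor_comp, hs.comp_zero,
        LinearMap.lTensor_zero, LinearMap.zero_apply]
  exact := rTensor_exact X h.fexact h.surj
  surj := LinearMap.rTensor_surjective X h.surj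

lemma SES.flat_left {f : A →ₗ[R] B} {g : B →ₗ[R] C} (h : SES f g) (hC : Module.Flat R C)
    (hB : Module.Flat R B) : Module.Flat R A := by
  rw [Module.Flat.iff_lTensor_preserves_injective_linearMap]
  intro I J _ _ _ _ φ hφ
  have h1 : Function.Injective (f.rTensor J ∘ₗ φ.lTensor A) := by
    rw [LinearMap.rTensor_comp_lTensor, ← LinearMap.lTensor_comp_rTensor]
    exact (Module.Flat.lTensor_preserves_injective_linearMap (M := B) φ hφ).comp
      (h.rTensor hC I).inj
  exact Function.Injective.of_comp (f := f.rTensor J) h1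

/-- Hom-tensor evaluation is onto for flat modules and finitely presented source. -/
lemma homTensor_surj (a K C : Type u) [AddCommGroup a] [AddCommGroup K] [AddCommGroup C]
    [Module R a] [Module R K] [Module R C] [Module.FinitePresentation R a] [Module.Flat R K]
    (g : a →ₗ[R] K ⊗[R] C) :
    ∃ t : K ⊗[R] (a →ₗ[R] C), lTensorHomToHomLTensor (.id R) a K C t = g := by
  obtain ⟨n, m, q, r, hq, hqr⟩ := Module.FinitePresentation.exists_fin' R a
  have nat : ∀ {U V : Type u} [AddCommGroup U] [AddCommGroup V] [Module R U] [Module R V]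
      (φ : U →ₗ[R] V) (t : K ⊗[R] (V →ₗ[R] C)),
      lTensorHomToHomLTensor (.id R) U K C ((φ.lcomp R C).lTensor K t) =
        lTensorHomToHomLTensor (.id R) V K C t ∘ₗ φ := by
    intro U V _ _ _ _ φ t
    induction t with
    | zero => simp
    | tmul k h => ext x; simp [LinearMap.lcomp_apply]
    | add x y hx hy => simp [hx, hy, LinearMap.add_comp]
  have ex : Function.Exact (q.lcomp R C) (r.lcomp R C) := by
    intro b
    constructor
    · intro hb
      obtain ⟨l, hl⟩ := (SES.ker_subtype hq).desc b (fun x => by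
        obtain ⟨y, hy⟩ := (hqr x.1).1 x.2
        have := LinearMap.congr_fun hb y
        simpa [LinearMap.lcomp_apply, hy] using this)
      exact ⟨l, LinearMap.ext hl⟩
    · rintro ⟨l, rfl⟩
      ext x
      simp [LinearMap.lcomp_apply, hqr.apply_apply_eq_zero]
  have ex2 := Module.Flat.lTensor_exact K ex
  obtain ⟨t, ht⟩ := (lTensorHomEquivHomLTensor R (Fin n → R) K C).surjective (g ∘ₗ q)
  rw [lTensorHomEquivHomLTensor_apply] at ht
  have h0 : (r.lcomp R C).lTensor K t = 0 := by
    apply (lTensorHomEquivHomLTensor R (Fin m → R) K C).injective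
    rw [lTensorHomEquivHomLTensor_apply, nat, ht, map_zero]
    ext x
    simp [hqr.apply_apply_eq_zero]
  obtain ⟨u, rfl⟩ := (ex2 _).1 h0
  refine ⟨u, ?_⟩
  rw [nat] at ht
  ext x
  obtain ⟨y, rfl⟩ := hq x
  exact LinearMap.congr_fun ht y

lemma injective_tensor [IsNoetherianRing R] {K E : Type u} [AddCommGroup K] [AddCommGroup E]
    [Module R K] [Module R E] (hK : Module.Flat R K) (hE : Module.Injective R E) :
    Module.Injective R (K ⊗[R] E) := by
  apply Module.Baer.injective
  intro a g
  have : Module.FinitePresentation R a := Module.finitePresentation_of_finite R a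
  obtain ⟨t, rfl⟩ := homTensor_surj a K E g
  induction t with
  | zero => exact ⟨0, by simp⟩
  | tmul k h =>
    obtain ⟨l, hl⟩ := Module.Baer.of_injective hE a h
    refine ⟨TensorProduct.mk R K E k ∘ₗ l, ?_⟩
    intro x hx
    simp [hl x hx]
  | add x y hx hy =>
    obtain ⟨l, hl⟩ := hx
    obtain ⟨l', hl'⟩ := hy
    exact ⟨l + l', fun x hx => by simp [hl x hx, hl' x hx]⟩

lemma lift_tensor [IsNoetherianRing R] {K P C : Type u} [AddCommGroup K] [AddCommGroup P]
    [AddCommGroup C] [Module R K] [Module R P] [Module R C] (hK : Module.Flat R K)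
    (p : P →ₗ[R] K) (hp : Function.Surjective p) (a : Ideal R) (g : a →ₗ[R] K ⊗[R] C) :
    ∃ g' : a →ₗ[R] P ⊗[R] C, ∀ x, p.rTensor C (g' x) = g x := by
  have : Module.FinitePresentation R a := Module.finitePresentation_of_finite R a
  obtain ⟨t, rfl⟩ := homTensor_surj a K C g
  induction t with
  | zero => exact ⟨0, by simp⟩
  | tmul k h =>
    obtain ⟨l, rfl⟩ := hp k
    exact ⟨lTensorHomToHomLTensor (.id R) a P C (l ⊗ₜ h), fun x => by simp⟩
  | add x y hx hy =>
    obtain ⟨l, hl⟩ := hx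
    obtain ⟨l', hl'⟩ := hy
    exact ⟨l + l', fun x => by simp [hl x, hl' x]⟩

/-- `S/R` is flat when `S` is faithfully flat -/
lemma flat_quot_of_faithfullyFlat (S : Type u) [CommRing S] [Algebra R S]
    [Module.FaithfullyFlat R S] :
    Module.Flat R (S ⧸ LinearMap.range (Algebra.linearMap R S)) := by
  set q := (LinearMap.range (Algebra.linearMap R S)).mkQ with hq
  suffices Module.Flat S (S ⊗[R] (S ⧸ LinearMap.range (Algebra.linearMap R S))) from
    Module.Flat.of_flat_tensorProduct R _ S
  let mul : S ⊗[R] S →ₗ[S] S := (Algebra.TensorProduct.lmul'' R (S := S)).toLinearMap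
  let inc : S →ₗ[S] S ⊗[R] S := LinearMap.toSpanSingleton S _ (1 ⊗ₜ[R] 1)
  have hqs : Function.Surjective (q.baseChange S) :=
    LinearMap.baseChange_surjective S (Submodule.mkQ_surjective _)
  have hs := SES.ker_subtype hqs
  have hex := lTensor_exact S (LinearMap.exact_subtype_mkQ (LinearMap.range (Algebra.linearMap R S)))
    (Submodule.mkQ_surjective _)
  have key : ∀ t : S ⊗[R] (LinearMap.range (Algebra.linearMap R S)),
      ((LinearMap.id : S ⊗[R] S →ₗ[S] S ⊗[R] S) - inc ∘ₗ mul)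
        ((LinearMap.range (Algebra.linearMap R S)).subtype.lTensor S t) = 0 := by
    intro t
    induction t with
    | zero => simp
    | tmul s x =>
      obtain ⟨x, r, rfl⟩ := x
      have e : s ⊗ₜ[R] (algebraMap R S r) = (r • s) ⊗ₜ[R] (1 : S) := by
        rw [Algebra.algebraMap_eq_smul_one, ← smul_tmul]
      have e2 : (Algebra.TensorProduct.lmul'' R (S := S)) ((r • s) ⊗ₜ[R] (1 : S)) = r • s :=
        mul_one _
      simp [inc, mul, e, e2, smul_tmul']
    | add x y hx hy => rw [map_add, map_add, hx, hy, add_zero]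
  obtain ⟨σ, hσ⟩ := hs.desc ((LinearMap.id : S ⊗[R] S →ₗ[S] S ⊗[R] S) - inc ∘ₗ mul) (fun x => by
    obtain ⟨t, ht⟩ := (hex x.1).1 x.2
    have := key t
    rw [ht] at this
    exact this)
  refine Module.Flat.of_retract σ (q.baseChange S) ?_
  refine LinearMap.ext fun x => ?_
  obtain ⟨y, rfl⟩ := hqs x
  have h1 : q 1 = 0 := (Submodule.Quotient.mk_eq_zero _).2 ⟨1, by simp⟩
  simp [hσ, inc, h1]

end Flatness
end GidAux

namespace GidAux

section FlatGI

open TensorProduct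

variable {R : Type u} [CommRing R]

/-- `Ext¹(P ⊗ C, G) = 0` for all free `P` and all Gorenstein injective `G`. -/
def OkC (R : Type u) [CommRing R] (C : Type u) [AddCommGroup C] [Module R C] : Prop :=
  ∀ (P : Type u) [AddCommGroup P] [Module R P], Module.Free R P →
    ∀ (G : Type u) [AddCommGroup G] [Module R G], GI R G → Ext1Z R (P ⊗[R] C) G

lemma okC_ring : OkC R R := by
  intro P _ _ hP G _ _ hG
  have : Module.Free R (P ⊗[R] R) := Module.Free.of_equiv (TensorProduct.rid R P).symm
  exact ext1Z_of_projective

lemma ext1Z_shift {X D Y : Type u} [AddCommGroup X] [AddCommGroup D] [AddCommGroup Y]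
    [Module R X] [Module R D] [Module R Y] {f : X →ₗ[R] D} {g : D →ₗ[R] Y} (hs : SES f g)
    (hD : Module.Injective R D)
    (h : ∀ (G : Type u) [AddCommGroup G] [Module R G], GI R G → Ext1Z R X G)
    (G : Type u) [AddCommGroup G] [Module R G] (hG : GI R G) : Ext1Z R Y G := by
  obtain ⟨h1, ⟨K, _, _, I, _, _, k, p, hI, ht, hK⟩, ⟨J, _, _, C, _, _, j, q, hJ, ht', hC⟩⟩ :=
    giClass_GI G hG
  refine ext1Z_of_inj hJ ht' fun φ => ?_
  obtain ⟨α, hα⟩ := h1 D hD _ _ j q ht' (φ ∘ₗ g)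
  obtain ⟨β, hβ⟩ := ht'.lift (α ∘ₗ f) (fun x => by simp [hα, hs.zero])
  obtain ⟨γ, hγ⟩ := h K hK _ _ k p ht β
  obtain ⟨δ, hδ⟩ := inj_ext hI hs.inj γ
  obtain ⟨l, hl⟩ := hs.desc (α - j ∘ₗ p ∘ₗ δ) (fun x => by simp [hδ, hγ, hβ])
  refine ⟨l, fun y => ?_⟩
  obtain ⟨d, rfl⟩ := hs.surj y
  simp [hl, hα, ht'.zero]

lemma exists_seq_colimit (X : ℕ → ModuleCat.{u} R) (j : ∀ n, X n →ₗ[R] X (n + 1))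
    (hj : ∀ n, Function.Injective (j n)) :
    ∃ (U : Type u) (_ : AddCommGroup U) (_ : Module R U) (ι : ∀ n, X n →ₗ[R] U),
      (∀ n x, ι (n + 1) (j n x) = ι n x) ∧ (∀ n, Function.Injective (ι n)) ∧
      (∀ u, ∃ n x, ι n x = u) ∧
      (∀ (G : Type u) [AddCommGroup G] [Module R G] (h : ∀ n, X n →ₗ[R] G),
        (∀ n x, h (n + 1) (j n x) = h n x) → ∃ l : U →ₗ[R] G, ∀ n x, l (ι n x) = h n x) := by
  let F : ℕ ⥤ ModuleCat.{u} R := Functor.ofSequence (fun n => ModuleCat.ofHom (j n))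
  let f : ∀ m n, m ≤ n → F.obj m →ₗ[R] F.obj n := fun m n h => (F.map (homOfLE h)).hom
  have f1 : ∀ n, f n (n + 1) (Nat.le_succ n) = j n := by
    intro n
    have := Functor.ofSequence_map_homOfLE_succ (fun n => ModuleCat.ofHom (j n)) n
    simp only [f, F]
    rw [this]
    rfl
  have f0 : ∀ n x, f n n le_rfl x = x := by
    intro n x
    have : F.map (homOfLE (le_refl n)) = 𝟙 _ := F.map_id n
    simp only [f]; rw [this]; rfl
  have f2 : ∀ a b c (h : a ≤ b) (h' : b ≤ c) x, f b c h' (f a b h x) = f a c (h.trans h') x := by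
    intro a b c h h' x
    have : F.map (homOfLE (h.trans h')) = F.map (homOfLE h) ≫ F.map (homOfLE h') := by
      rw [← F.map_comp]; rfl
    simp only [f]; rw [this]; rfl
  have finj : ∀ m n h, Function.Injective (f m n h) := by
    intro m n h
    induction n, h using Nat.le_induction with
    | base => intro x y hxy; rwa [f0, f0] at hxy
    | succ n h ih =>
      intro x y hxy
      rw [← f2 m n (n + 1) h (Nat.le_succ n), ← f2 m n (n + 1) h (Nat.le_succ n), f1] at hxy
      exact ih (hj _ hxy)
  have ds : DirectedSystem (fun n => F.obj n) (fun a b h => f a b h) :=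
    { map_self := fun i x => f0 i x
      map_map := fun _ _ _ _ _ x => f2 _ _ _ _ _ x }
  refine ⟨Module.DirectLimit (fun n => F.obj n) f, inferInstance, inferInstance,
    Module.DirectLimit.of R ℕ (fun n => F.obj n) f, ?_, ?_, ?_, ?_⟩
  · intro n x
    rw [← f1]
    exact Module.DirectLimit.of_f
  · intro n
    refine (injective_iff_map_eq_zero (Module.DirectLimit.of R ℕ (fun n => F.obj n) f n)).2 ?_
    intro x hx
    obtain ⟨m, h, hm⟩ := Module.DirectLimit.of.zero_exact hx
    exact finj _ _ _ (hm.trans (map_zero _).symm)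
  · intro u
    exact Module.DirectLimit.exists_of u
  · intro G _ _ h hh
    refine ⟨Module.DirectLimit.lift R ℕ _ f h ?_, fun n x => Module.DirectLimit.lift_of _ _ _⟩
    intro m n hmn
    induction n, hmn using Nat.le_induction with
    | base => intro x; rw [f0]
    | succ n hmn ih =>
      intro x
      rw [← f2 m n (n + 1) hmn (Nat.le_succ n), f1]
      exact (hh n _).trans (ih x)

variable [IsNoetherianRing R]

lemma OkC.next {C D C' : Type u} [AddCommGroup C] [AddCommGroup D] [AddCommGroup C']
    [Module R C] [Module R D] [Module R C'] {f : C →ₗ[R] D} {g : D →ₗ[R] C'} (hs : SES f g)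
    (hD : Module.Injective R D) (h : OkC R C) : OkC R C' := by
  intro P _ _ hP G _ _ hG
  have hPf : Module.Flat R P := inferInstance
  exact ext1Z_shift (hs.lTensor hPf) (injective_tensor hPf hD) (fun G _ _ hG => h P hP G hG) G hG

def Good (R : Type u) [CommRing R] (X : Type u) [AddCommGroup X] [Module R X] : Prop :=
  ∃ (C : Type u) (_ : AddCommGroup C) (_ : Module R C) (K : Type u) (_ : AddCommGroup K)
    (_ : Module R K) (J : Type u) (_ : AddCommGroup J) (_ : Module R J),
    OkC R C ∧ Module.Flat R K ∧ Module.Injective R J ∧ Nonempty (X ≃ₗ[R] (K ⊗[R] C) × J)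

lemma good_flat {F : Type u} [AddCommGroup F] [Module R F] (hF : Module.Flat R F) : Good R F :=
  ⟨R, _, _, F, _, _, PUnit, _, _, okC_ring, hF, injective_punit,
    ⟨(TensorProduct.rid R F).symm ≪≫ₗ (LinearEquiv.prodUnique (R := R)).symm⟩⟩

lemma Good.step {X : Type u} [AddCommGroup X] [Module R X] (h : Good R X) :
    ∃ (X' : ModuleCat.{u} R) (j : X →ₗ[R] X'), Good R X' ∧ Function.Injective j ∧
      (∀ (G : Type u) [AddCommGroup G] [Module R G], GI R G → ∀ f : X →ₗ[R] G,
        ∃ f' : X' →ₗ[R] G, ∀ x, f' (j x) = f x) ∧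
      (∀ (a : Ideal R) (g : a →ₗ[R] X), ∃ g' : R →ₗ[R] X', ∀ x, g' (a.subtype x) = j (g x)) := by
  obtain ⟨C, _, _, K, _, _, J, _, _, hC, hK, hJ, ⟨e⟩⟩ := h
  obtain ⟨K', _, _, P, _, _, k, p, hP, hkp⟩ := exists_free (R := R) K
  have hPf : Module.Flat R P := inferInstance
  have hK' : Module.Flat R K' := hkp.flat_left hK hPf
  obtain ⟨D, _, _, C', _, _, i, π, hD, hiπ⟩ := exists_inj (R := R) C
  have hC' : OkC R C' := hC.next hiπ hD
  have sD := hkp.rTensor hK D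
  have sC' := hkp.rTensor hK C'
  have sK := hiπ.lTensor hK
  have comm : ∀ {A B X Y : Type u} [AddCommGroup A] [AddCommGroup B] [AddCommGroup X]
        [AddCommGroup Y] [Module R A] [Module R B] [Module R X] [Module R Y]
        (f : A →ₗ[R] B) (p : X →ₗ[R] Y) (l : A ⊗[R] X),
        f.rTensor Y (p.lTensor A l) = p.lTensor B (f.rTensor X l) := by
    intro A B X Y _ _ _ _ _ _ _ _ f p l
    rw [← LinearMap.comp_apply, ← LinearMap.comp_apply, LinearMap.rTensor_comp_lTensor,
      LinearMap.lTensor_comp_rTensor]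
  obtain ⟨σ, hσ⟩ := ext1Z_injective (X := K ⊗[R] D) (injective_tensor hK' hD) _ _ _ _ sD
    LinearMap.id
  simp only [LinearMap.id_apply] at hσ
  let s : K ⊗[R] D →ₗ[R] P ⊗[R] C' := π.lTensor P ∘ₗ σ
  have hs : ∀ x, p.rTensor C' (s x) = π.lTensor K x := by
    intro x
    simp only [s, LinearMap.comp_apply, comm, hσ]
  obtain ⟨t, ht⟩ := sC'.lift (-(s ∘ₗ i.lTensor K)) (fun x => by
    rw [LinearMap.neg_apply, map_neg, LinearMap.comp_apply, hs, sK.zero, neg_zero])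
  simp only [LinearMap.neg_apply, LinearMap.comp_apply] at ht
  have hw : SES ((i.lTensor K).prod t) (s.coprod (k.rTensor C')) := by
    refine ⟨?_, ?_, ?_⟩
    · intro x y hxy
      exact sK.inj (Prod.ext_iff.1 hxy).1
    · rintro ⟨x, y⟩
      rw [LinearMap.coprod_apply]
      constructor
      · intro h0
        have h1 := congrArg (p.rTensor C') h0
        rw [map_add, hs, sC'.zero, add_zero, map_zero] at h1
        obtain ⟨z, rfl⟩ := (sK.exact _).1 h1
        refine ⟨z, Prod.ext rfl (sC'.inj ?_)⟩
        simp only [LinearMap.prod_apply, Function.prod_apply]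
        rw [ht]
        exact neg_eq_of_add_eq_zero_right h0
      · rintro ⟨z, hz⟩
        obtain ⟨h1, h2⟩ := Prod.ext_iff.1 hz
        simp only [LinearMap.prod_apply, Function.prod_apply] at h1 h2
        rw [← h1, ← h2, ht, add_neg_cancel]
    · intro c
      obtain ⟨x, hx⟩ := sK.surj (p.rTensor C' c)
      obtain ⟨y, hy⟩ := (sC'.exact (c - s x)).1 (by rw [map_sub, hs, hx, sub_self])
      exact ⟨(x, y), by rw [LinearMap.coprod_apply, hy]; abel⟩
  let j : X →ₗ[R] (K' ⊗[R] C') × ((K ⊗[R] D) × J) :=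
    ((t ∘ₗ LinearMap.fst R _ _).prod
        ((i.lTensor K ∘ₗ LinearMap.fst R _ _).prod (LinearMap.snd R _ _))) ∘ₗ e.toLinearMap
  have hj : ∀ x, j x = (t (e x).1, (i.lTensor K (e x).1, (e x).2)) := fun x => rfl
  have hDK := injective_tensor hK hD
  refine ⟨ModuleCat.of R ((K' ⊗[R] C') × ((K ⊗[R] D) × J)), j, ?_, ?_, ?_, ?_⟩
  · exact ⟨C', _, _, K', _, _, (K ⊗[R] D) × J, _, _, hC', hK', injective_prod hDK hJ,
      ⟨LinearEquiv.refl _ _⟩⟩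
  · intro x y hxy
    rw [hj, hj] at hxy
    simp only [Prod.mk.injEq] at hxy
    exact e.injective (Prod.ext (sK.inj hxy.2.1) hxy.2.2)
  · intro G _ _ hG f
    obtain ⟨l, hl⟩ := (hC' P hP G hG).extend hw
      (f ∘ₗ e.symm.toLinearMap ∘ₗ LinearMap.inl R _ _)
    refine ⟨(l ∘ₗ LinearMap.inr R _ _).coprod ((l ∘ₗ LinearMap.inl R _ _).coprod
      (f ∘ₗ e.symm.toLinearMap ∘ₗ LinearMap.inr R _ _)), fun x => ?_⟩
    rw [hj]
    have h1 := hl (e x).1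
    simp only [LinearMap.coprod_apply, LinearMap.comp_apply, LinearMap.inl_apply,
      LinearMap.inr_apply, LinearMap.prod_apply, Function.prod_apply] at h1 ⊢
    rw [← add_assoc, ← map_add, Prod.mk_add_mk, zero_add, add_zero, h1, ← map_add]
    congr 1
    apply e.injective
    simp
  · intro a g
    let g1 : a →ₗ[R] K ⊗[R] C := LinearMap.fst R _ _ ∘ₗ e.toLinearMap ∘ₗ g
    let g2 : a →ₗ[R] J := LinearMap.snd R _ _ ∘ₗ e.toLinearMap ∘ₗ g
    obtain ⟨g', hg'⟩ := lift_tensor hK p hkp.surj a g1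
    obtain ⟨h, hh⟩ := sD.lift (i.lTensor P ∘ₗ g' - σ ∘ₗ i.lTensor K ∘ₗ g1) (fun x => by
      simp only [LinearMap.sub_apply, LinearMap.comp_apply, map_sub, comm, hg', hσ, sub_self])
    have h1 : ∀ x, π.lTensor K' (h x) = t (g1 x) := by
      intro x
      apply sC'.inj
      rw [ht, comm, hh]
      have := (hiπ.lTensor hPf).zero (g' x)
      simp only [LinearMap.sub_apply, LinearMap.comp_apply, map_sub, this, zero_sub, s]
    obtain ⟨l1, hl1⟩ := inj_ext (injective_tensor hK' hD) (f := a.subtype) Subtype.val_injective h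
    obtain ⟨l2, hl2⟩ := inj_ext hDK (f := a.subtype) Subtype.val_injective (i.lTensor K ∘ₗ g1)
    obtain ⟨l3, hl3⟩ := inj_ext hJ (f := a.subtype) Subtype.val_injective g2
    refine ⟨(π.lTensor K' ∘ₗ l1).prod (l2.prod l3), fun x => ?_⟩
    rw [hj]
    refine Prod.ext ?_ (Prod.ext (hl2 x) (hl3 x))
    change π.lTensor K' (l1 _) = _
    rw [hl1, h1]
    rfl

/-- flat modules are Ext-orthogonal to Gorenstein injective ones -/
theorem flat_ext1Z_GI {F G : Type u} [AddCommGroup F] [AddCommGroup G] [Module R F] [Module R G]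
    (hF : Module.Flat R F) (hG : GI R G) : Ext1Z R F G := by
  let T := {X : ModuleCat.{u} R // Good R X}
  have hstep : ∀ t : T, ∃ (X' : T) (j : t.1 →ₗ[R] X'.1), Function.Injective j ∧
      (∀ (G : Type u) [AddCommGroup G] [Module R G], GI R G → ∀ f : t.1 →ₗ[R] G,
        ∃ f' : X'.1 →ₗ[R] G, ∀ x, f' (j x) = f x) ∧
      (∀ (a : Ideal R) (g : a →ₗ[R] t.1), ∃ g' : R →ₗ[R] X'.1,
        ∀ x, g' (a.subtype x) = j (g x)) := by
    rintro ⟨X, hX⟩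
    obtain ⟨X', j, hX', h⟩ := hX.step
    exact ⟨⟨X', hX'⟩, j, h⟩
  choose nx nj ninj nG na using hstep
  let t0 : T := ⟨ModuleCat.of R F, good_flat hF⟩
  let t : ℕ → T := fun n => Nat.rec t0 (fun _ t => nx t) n
  obtain ⟨U, _, _, ι, hι, hinj, hsurj, hdesc⟩ := exists_seq_colimit (fun n => (t n).1)
    (fun n => nj (t n)) (fun n => ninj (t n))
  have hmono : ∀ m n, m ≤ n → LinearMap.range (ι m) ≤ LinearMap.range (ι n) := by
    intro m n h
    induction n, h using Nat.le_induction with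
    | base => exact le_rfl
    | succ n h ih =>
      refine ih.trans ?_
      rintro _ ⟨x, rfl⟩
      exact ⟨_, hι n x⟩
  have hU : Module.Injective R U := by
    apply Module.Baer.injective
    classical
    intro a g
    have hfg : (LinearMap.range g).FG := by
      rw [← Submodule.map_top]
      exact (Module.Finite.fg_top (R := R) (M := a)).map g
    obtain ⟨n, hn⟩ : ∃ n, LinearMap.range g ≤ LinearMap.range (ι n) := by
      obtain ⟨s, hs⟩ := hfg
      rw [← hs]
      clear hs
      induction s using Finset.induction with
      | empty => exact ⟨0, by simp⟩
      | insert u s _ ih =>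
        obtain ⟨n, hn⟩ := ih
        obtain ⟨m, x, hx⟩ := hsurj u
        refine ⟨max m n, ?_⟩
        rw [Submodule.span_le, Finset.coe_insert, Set.insert_subset_iff]
        exact ⟨hmono _ _ (le_max_left _ _) ⟨x, hx⟩,
          Submodule.span_le.1 (hn.trans (hmono _ _ (le_max_right _ _)))⟩
    obtain ⟨g0, hg0⟩ := (SES.range_mkQ (hinj n)).lift g (fun x => by
      rw [Submodule.mkQ_apply, Submodule.Quotient.mk_eq_zero]
      exact hn ⟨x, rfl⟩)
    obtain ⟨g', hg'⟩ := na (t n) a g0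
    refine ⟨ι (n + 1) ∘ₗ g', fun x hx => ?_⟩
    have := hg' ⟨x, hx⟩
    rw [← hg0, ← hι]
    exact congrArg _ this
  obtain ⟨h1, -, ⟨J, _, _, C, _, _, j, q, hJ, hs, hC⟩⟩ := giClass_GI G hG
  refine ext1Z_of_inj hJ hs fun φ => ?_
  choose ext hext using fun t => nG t C hC
  let fs : ∀ n, (t n).1 →ₗ[R] C := fun n => Nat.rec (motive := fun n => (t n).1 →ₗ[R] C) φ
    (fun n f => ext (t n) f) n
  obtain ⟨l, hl⟩ := hdesc C fs (fun n x => hext (t n) (fs n) x)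
  obtain ⟨m, hm⟩ := h1 U hU _ _ j q hs l
  exact ⟨m ∘ₗ ι 0, fun x => by rw [LinearMap.comp_apply, hm, hl]; rfl⟩

end FlatGI
end GidAux

namespace GidAux

section Change

open TensorProduct

lemma ext1Z_of_subsingleton {R : Type u} [CommRing R] {F M : Type u} [AddCommGroup F]
    [AddCommGroup M] [Module R F] [Module R M]
    (h : Subsingleton (Abelian.Ext (ModuleCat.of R F) (ModuleCat.of R M) 1)) : Ext1Z R F M := by
  intro B C _ _ _ _ f g hs φ
  let T : ShortComplex (ModuleCat.{u} R) :=
    ShortComplex.mk (ModuleCat.ofHom f) (ModuleCat.ofHom g) (by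
      rw [← ModuleCat.ofHom_comp, hs.comp_zero]; rfl)
  have hT : T.ShortExact := by
    have : Mono T.f := (ModuleCat.mono_iff_injective _).2 hs.inj
    have : Epi T.g := (ModuleCat.epi_iff_surjective _).2 hs.surj
    exact ⟨(ShortComplex.ShortExact.moduleCat_exact_iff_function_exact T).2 hs.fexact⟩
  obtain ⟨x, hx⟩ := Abelian.Ext.covariant_sequence_exact₃ (ModuleCat.of R F) hT
    (Abelian.Ext.mk₀ (ModuleCat.ofHom φ)) (zero_add 1) (Subsingleton.elim _ _)
  obtain ⟨k, rfl⟩ := Abelian.Ext.homEquiv₀.symm.surjective x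
  rw [Abelian.Ext.homEquiv₀_symm_apply, Abelian.Ext.mk₀_comp_mk₀] at hx
  have := Abelian.Ext.homEquiv₀.symm.injective hx
  refine ⟨k.hom, fun x => ?_⟩
  exact congrArg (fun q => q.hom x) this

variable {R : Type u} [CommRing R]

/-- cotorsion modules -/
def Cot (R : Type u) [CommRing R] (N : Type u) [AddCommGroup N] [Module R N] : Prop :=
  ∀ (F : Type u) [AddCommGroup F] [Module R F], Module.Flat R F → Ext1Z R F N

lemma Cot.of_injective {N : Type u} [AddCommGroup N] [Module R N] (h : Module.Injective R N) :
    Cot R N := fun F _ _ _ => ext1Z_injective h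

lemma Cot.of_GI [IsNoetherianRing R] {N : Type u} [AddCommGroup N] [Module R N] (h : GI R N) :
    Cot R N := fun F _ _ hF => flat_ext1Z_GI hF h

lemma Cot.coker {A B C : Type u} [AddCommGroup A] [AddCommGroup B] [AddCommGroup C]
    [Module R A] [Module R B] [Module R C] {f : A →ₗ[R] B} {g : B →ₗ[R] C} (hs : SES f g)
    (hA : Cot R A) (hB : Cot R B) : Cot R C := by
  intro F _ _ hF
  obtain ⟨K, _, _, P, _, _, k, p, hP, ht⟩ := exists_free (R := R) F
  have hPf : Module.Flat R P := inferInstance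
  refine ext1Z_of_extend ht fun φ => ?_
  obtain ⟨ψ, hψ⟩ := hA K (ht.flat_left hF hPf) _ _ f g hs φ
  obtain ⟨l, hl⟩ := (hB F hF).extend ht ψ
  exact ⟨g ∘ₗ l, fun a => by simp [hl, hψ]⟩

variable (S : Type u) [CommRing S] [Algebra R S]

instance homTower {N : Type u} [AddCommGroup N] [Module R N] :
    IsScalarTower R S (S →ₗ[R] N) :=
  ⟨fun r s f => LinearMap.ext fun t => by
    rw [homSMul_apply, LinearMap.smul_apply, homSMul_apply, smul_mul_assoc, map_smul]⟩

variable {A B C X Y N : Type u} [AddCommGroup A] [AddCommGroup B] [AddCommGroup C]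
    [AddCommGroup X] [AddCommGroup Y] [AddCommGroup N]
    [Module R A] [Module R B] [Module R C] [Module R X] [Module R Y] [Module R N]

/-- evaluation at one -/
def ev (N : Type u) [AddCommGroup N] [Module R N] : (S →ₗ[R] N) →ₗ[R] N where
  toFun f := f 1
  map_add' _ _ := rfl
  map_smul' _ _ := rfl

/-- functoriality -/
def hmap (f : A →ₗ[R] B) : (S →ₗ[R] A) →ₗ[S] (S →ₗ[R] B) where
  toFun k := f ∘ₗ k
  map_add' k l := by ext; simp
  map_smul' s k := by ext; rfl

lemma hmap_apply (f : A →ₗ[R] B) (k : S →ₗ[R] A) (s : S) : hmap S f k s = f (k s) := rfl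

/-- adjunction -/
def toHom [Module S X] [IsScalarTower R S X] (k : X →ₗ[R] N) : X →ₗ[S] (S →ₗ[R] N) where
  toFun x :=
    { toFun := fun s => k (s • x)
      map_add' := fun s t => by rw [add_smul, map_add]
      map_smul' := fun r s => by rw [smul_assoc, map_smul]; rfl }
  map_add' x y := by ext s; simp
  map_smul' s x := by
    ext t
    change k (t • s • x) = k ((s * t) • x)
    rw [smul_smul, mul_comm]

lemma toHom_apply [Module S X] [IsScalarTower R S X] (k : X →ₗ[R] N) (x : X) (s : S) :
    toHom S k x s = k (s • x) := rfl

lemma SES.hom {f : A →ₗ[R] B} {g : B →ₗ[R] C} (hs : SES f g) (h : Ext1Z R S A) :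
    SES (hmap S f) (hmap S g) where
  inj := fun x y hxy => LinearMap.ext fun s => hs.inj (LinearMap.congr_fun hxy s)
  exact := fun b => by
    constructor
    · intro hb
      obtain ⟨l, hl⟩ := hs.lift b (fun x => LinearMap.congr_fun hb x)
      exact ⟨l, LinearMap.ext hl⟩
    · rintro ⟨a, rfl⟩
      exact LinearMap.ext fun s => hs.zero _
  surj := fun φ => by
    obtain ⟨k, hk⟩ := h _ _ f g hs φ
    exact ⟨k, LinearMap.ext hk⟩

/-- S-injective modules are R-injective -/
lemma injective_restrict [Module.Flat R S] {E : Type u} [AddCommGroup E] [Module R E] [Module S E]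
    [IsScalarTower R S E] (hE : Module.Injective S E) : Module.Injective R E where
  out X Y _ _ _ _ f hf g := by
    have h1 : Function.Injective (f.baseChange S) :=
      Module.Flat.lTensor_preserves_injective_linearMap (M := S) f hf
    obtain ⟨l, hl⟩ := hE.out (f.baseChange S) h1 (LinearMap.liftBaseChange S g)
    refine ⟨l.restrictScalars R ∘ₗ TensorProduct.mk R S Y 1, fun x => ?_⟩
    have := hl (1 ⊗ₜ x)
    simpa using this

lemma injective_hom {J : Type u} [AddCommGroup J] [Module R J] (hJ : Module.Injective R J) :
    Module.Injective S (S →ₗ[R] J) where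
  out X Y _ _ _ _ f hf g := by
    letI : Module R X := Module.compHom X (algebraMap R S)
    haveI : IsScalarTower R S X := IsScalarTower.of_algebraMap_smul (fun r x => rfl)
    letI : Module R Y := Module.compHom Y (algebraMap R S)
    haveI : IsScalarTower R S Y := IsScalarTower.of_algebraMap_smul (fun r x => rfl)
    obtain ⟨l, hl⟩ := hJ.out (f.restrictScalars R) hf (ev S J ∘ₗ g.restrictScalars R)
    refine ⟨toHom S l, fun x => ?_⟩
    ext s
    have := hl (s • x)
    simp only [LinearMap.restrictScalars_apply, LinearMap.comp_apply, map_smul] at this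
    rw [toHom_apply, this]
    change g x (s * 1) = _
    rw [mul_one]

variable {S} in
lemma SES.congr_left {f : A →ₗ[R] B} {g : B →ₗ[R] C} (hs : SES f g) (e : X ≃ₗ[R] A) :
    SES (f ∘ₗ e.toLinearMap) g :=
  ⟨hs.inj.comp e.injective, fun b => by
    rw [hs.exact]
    constructor
    · rintro ⟨a, rfl⟩; exact ⟨e.symm a, by simp⟩
    · rintro ⟨a, rfl⟩; exact ⟨e a, rfl⟩, hs.surj⟩

variable {S} in
lemma SES.congr_right {f : A →ₗ[R] B} {g : B →ₗ[R] C} (hs : SES f g) (e : X ≃ₗ[R] C) :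
    SES f (e.symm.toLinearMap ∘ₗ g) :=
  ⟨hs.inj, fun b => by rw [← hs.exact]; simp, e.symm.surjective.comp hs.surj⟩

/-- coinduction preserves Gorenstein injectives -/
lemma GI.hom [IsNoetherianRing R] [Module.Flat R S] {J : Type u} [AddCommGroup J] [Module R J]
    (hJ : GI R J) : GI S (S →ₗ[R] J) := by
  refine ⟨fun N _ _ => ∃ (J : Type u) (_ : AddCommGroup J) (_ : Module R J), GI R J ∧
    Nonempty (N ≃ₗ[S] (S →ₗ[R] J)), ?_, J, _, _, hJ, ⟨LinearEquiv.refl _ _⟩⟩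
  clear hJ
  rintro N _ _ ⟨J, _, _, hJ, ⟨e⟩⟩
  have hSf : Module.Flat R S := inferInstance
  obtain ⟨h1, ⟨K, _, _, I, _, _, f, g, hI, hs, hK⟩, ⟨I', _, _, C, _, _, f', g', hI', hs', hC⟩⟩ :=
    giClass_GI J hJ
  refine ⟨?_, ⟨S →ₗ[R] K, _, _, S →ₗ[R] I, _, _, hmap S f, _, injective_hom S hI,
    ((hs.hom S (Cot.of_GI hK S hSf)).congr_right e), K, _, _, hK, ⟨LinearEquiv.refl _ _⟩⟩,
    ⟨S →ₗ[R] I', _, _, S →ₗ[R] C, _, _, _, hmap S g', injective_hom S hI',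
    ((hs'.hom S (Cot.of_GI hJ S hSf)).congr_left e), C, _, _, hC, ⟨LinearEquiv.refl _ _⟩⟩⟩
  intro E _ _ hE
  refine Ext1Z.retract (B := S →ₗ[R] J) ?_ e.toLinearMap e.symm.toLinearMap (by simp)
  letI : Module R E := Module.compHom E (algebraMap R S)
  haveI : IsScalarTower R S E := IsScalarTower.of_algebraMap_smul (fun r x => rfl)
  refine ext1Z_of_inj (injective_hom S hI') (hs'.hom S (Cot.of_GI hJ S hSf)) fun φ => ?_
  obtain ⟨k, hk⟩ := h1 E (injective_restrict S hE) _ _ f' g' hs' (ev S C ∘ₗ φ.restrictScalars R)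
  refine ⟨toHom S k, fun x => ?_⟩
  ext s
  rw [hmap_apply, toHom_apply, hk]
  change φ (s • x) 1 = _
  rw [map_smul, homSMul_apply, mul_one]

variable [Module.FaithfullyFlat R S]

lemma ses_ring : SES (Algebra.linearMap R S) (LinearMap.range (Algebra.linearMap R S)).mkQ :=
  SES.range_mkQ (FaithfulSMul.algebraMap_injective R S)

lemma ev_surj (hN : Cot R N) : Function.Surjective (ev (R := R) S N) := by
  intro n
  obtain ⟨l, hl⟩ := (hN _ (flat_quot_of_faithfullyFlat S)).extend (ses_ring (R := R) S)
    (LinearMap.toSpanSingleton R N n)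
  refine ⟨l, ?_⟩
  have := hl 1
  have h2 : l 1 = n := by simpa using this
  exact h2

/-- extension to the base change -/
lemma extend_baseChange (hN : Cot R N) {F : Type u} [AddCommGroup F] [Module R F]
    (hF : Module.Flat R F) (f : F →ₗ[R] N) : ∃ f' : S ⊗[R] F →ₗ[R] N, ∀ x, f' (1 ⊗ₜ x) = f x := by
  have hq := flat_quot_of_faithfullyFlat (R := R) S
  have h1 := ((ses_ring (R := R) S).rTensor hq F).congr_left (TensorProduct.lid R F).symm
  obtain ⟨l, hl⟩ := (hN _ (inferInstance : Module.Flat R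
    ((S ⧸ LinearMap.range (Algebra.linearMap R S)) ⊗[R] F))).extend h1 f
  refine ⟨l, fun x => ?_⟩
  have := hl x
  simpa using this

/-- an injective module is a direct summand of the coinduced one -/
lemma injective_section {E : Type u} [AddCommGroup E] [Module R E] (hE : Module.Injective R E) :
    ∃ σ : E →ₗ[R] (S →ₗ[R] E), ∀ x, ev S E (σ x) = x := by
  obtain ⟨l, hl⟩ := hE.out (TensorProduct.mk R S E 1)
    (Module.FaithfullyFlat.tensorProduct_mk_injective E) LinearMap.id
  refine ⟨((TensorProduct.mk R S E).compr₂ l).flip, fun x => ?_⟩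
  exact hl x

/-- the descent theorem -/
lemma GI.of_hom [IsNoetherianRing R] [IsNoetherianRing S] (hc : Cot R N)
    (hN : GI S (S →ₗ[R] N)) : GI R N := by
  refine ⟨fun N _ _ => Cot R N ∧ GI S (S →ₗ[R] N), ?_, hc, hN⟩
  clear hN hc
  rintro N _ _ ⟨hc, hN⟩
  have hSf : Module.Flat R S := inferInstance
  obtain ⟨h1, ⟨H', _, _, I, _, _, a, b, hI, hs, hH'⟩, -⟩ := giClass_GI _ hN
  obtain ⟨J, _, _, C, _, _, j, q, hJ, ht⟩ := exists_inj (R := R) N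
  have ht' := ht.hom S (hc S hSf)
  refine ⟨?_, ?_, ?_⟩
  · intro E _ _ hE
    obtain ⟨σ, hσ⟩ := injective_section S hE
    refine Ext1Z.retract_left (B := S →ₗ[R] E) ?_ σ (ev S E) hσ
    refine ext1Z_of_inj hJ ht fun φ => ?_
    obtain ⟨k, hk⟩ := h1 _ (injective_hom S hE) _ _ _ _ ht' (toHom S φ)
    refine ⟨ev S J ∘ₗ k.restrictScalars R, fun x => ?_⟩
    have := LinearMap.congr_fun (hk x) 1
    rw [hmap_apply, toHom_apply, one_smul] at this
    exact this
  · letI : Module R I := Module.compHom I (algebraMap R S)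
    haveI : IsScalarTower R S I := IsScalarTower.of_algebraMap_smul (fun r x => rfl)
    have hIR : Module.Injective R I := injective_restrict S hI
    let p : I →ₗ[R] N := ev S N ∘ₗ b.restrictScalars R
    have hp : Function.Surjective p := (ev_surj S hc).comp hs.surj
    have hL := SES.ker_subtype hp
    have hcL : Cot R (LinearMap.ker p) := by
      intro F _ _ hF
      refine ext1Z_of_inj hIR hL fun f => ?_
      obtain ⟨f', hf'⟩ := extend_baseChange S hc hF f
      obtain ⟨m, hm⟩ := flat_ext1Z_GI (R := S) (F := S ⊗[R] F) inferInstance hH' _ _ a b hs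
        (toHom S f')
      refine ⟨m.restrictScalars R ∘ₗ TensorProduct.mk R S F 1, fun x => ?_⟩
      have := LinearMap.congr_fun (hm (1 ⊗ₜ x)) 1
      rw [toHom_apply, one_smul, hf'] at this
      exact this
    refine ⟨_, _, _, I, _, _, _, p, hIR, hL, hcL, ?_⟩
    have hL' := hL.hom S (hcL S hSf)
    let D : (I × (S →ₗ[R] I)) →ₗ[S] (S →ₗ[R] N) := b.coprod (-(hmap S p))
    have hD : ∀ x y, D (x, y) = b x - hmap S p y := fun x y => by
      simp [D, sub_eq_add_neg]
    have hunit : ∀ x, hmap S p (toHom S (LinearMap.id : I →ₗ[R] I) x) = b x := by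
      intro x
      ext s
      rw [hmap_apply, toHom_apply]
      change b (s • x) 1 = _
      rw [map_smul, homSMul_apply, mul_one]
    have hQ : GI S (LinearMap.ker D) := by
      refine GI.ext (f := (LinearMap.inl S I (S →ₗ[R] I) ∘ₗ a).codRestrict (LinearMap.ker D) ?_)
        (g := LinearMap.snd S I (S →ₗ[R] I) ∘ₗ (LinearMap.ker D).subtype) ⟨?_, ?_, ?_⟩ hH'
        (GI.of_injective (injective_hom S hIR))
      · intro x
        rw [LinearMap.mem_ker]
        change D (a x, 0) = 0
        rw [hD, hs.zero, map_zero, sub_zero]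
      · intro x y hxy
        exact hs.inj (congrArg (fun z => z.1.1) hxy)
      · rintro ⟨⟨x, y⟩, hxy⟩
        rw [LinearMap.mem_ker, hD] at hxy
        constructor
        · intro hy
          change y = 0 at hy
          subst hy
          rw [map_zero, sub_zero] at hxy
          obtain ⟨z, hz⟩ := (hs.exact _).1 hxy
          exact ⟨z, Subtype.ext (Prod.ext hz rfl)⟩
        · rintro ⟨z, hz⟩
          exact (congrArg (fun z => z.1.2) hz).symm
      · intro y
        obtain ⟨x, hx⟩ := hs.surj (hmap S p y)
        exact ⟨⟨(x, y), by rw [LinearMap.mem_ker, hD, hx, sub_self]⟩, rfl⟩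
    obtain ⟨r, hr⟩ := hL'.lift
      ((LinearMap.snd S I (S →ₗ[R] I) - toHom S (LinearMap.id : I →ₗ[R] I) ∘ₗ
        LinearMap.fst S I (S →ₗ[R] I)) ∘ₗ (LinearMap.ker D).subtype) (by
        rintro ⟨⟨x, y⟩, hxy⟩
        rw [LinearMap.mem_ker, hD] at hxy
        simp only [LinearMap.comp_apply, LinearMap.sub_apply, LinearMap.snd_apply,
          LinearMap.fst_apply, Submodule.subtype_apply]
        rw [map_sub, hunit, ← neg_sub, hxy, neg_zero])
    refine hQ.retract ((LinearMap.inr S I (S →ₗ[R] I) ∘ₗ hmap S (LinearMap.ker p).subtype).codRestrict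
      (LinearMap.ker D) ?_) r ?_
    · intro z
      rw [LinearMap.mem_ker]
      change D (0, hmap S _ z) = 0
      rw [hD, hL'.zero, map_zero, sub_zero]
    · intro z
      apply hL'.inj
      rw [hr]
      simp
  · exact ⟨J, _, _, C, _, _, j, q, hJ, ht, hc.coker ht (Cot.of_injective hJ),
      GI.coker ht' hN (GI.of_injective (injective_hom S hJ))⟩

theorem gle_iff [IsNoetherianRing R] [IsNoetherianRing S] (n : ℕ) :
    ∀ (M : Type u) [AddCommGroup M] [Module R M], Cot R M →
      (GLE R n M ↔ GLE S n (S →ₗ[R] M)) := by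
  have hSf : Module.Flat R S := inferInstance
  induction n with
  | zero => exact fun M _ _ hM => ⟨fun h => GI.hom S h, fun h => GI.of_hom S hM h⟩
  | succ n ih =>
    intro M _ _ hM
    constructor
    · rintro ⟨J, _, _, C, _, _, f, g, hJ, hs, hC⟩
      exact ⟨S →ₗ[R] J, _, _, S →ₗ[R] C, _, _, hmap S f, hmap S g, GI.hom S hJ,
        hs.hom S (hM S hSf), (ih C (hM.coker hs (Cot.of_GI hJ))).1 hC⟩
    · intro h
      obtain ⟨J, _, _, C, _, _, j, q, hJ, ht⟩ := exists_inj (R := R) M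
      exact ⟨J, _, _, C, _, _, j, q, GI.of_injective hJ, ht,
        (ih C (hM.coker ht (Cot.of_injective hJ))).2
          (GLE.cosyzygy n (ht.hom S (hM S hSf)) (injective_hom S hJ) h)⟩

end Change
end GidAux

theorem gid_eq_gid_hom_of_faithfullyFlat_of_cotorsion
    (R S : Type u) [CommRing R] [CommRing S] [IsNoetherianRing R] [IsNoetherianRing S]
    [Algebra R S] [Module.FaithfullyFlat R S] (hdim : ringKrullDim S < ⊤)
    (M : Type u) [AddCommGroup M] [Module R M]
    (hcotorsion : ∀ (F : Type u) [AddCommGroup F] [Module R F], Module.Flat R F →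
      Subsingleton (Abelian.Ext (ModuleCat.of R F) (ModuleCat.of R M) 1)) :
    gid R M = gid S (S →ₗ[R] M) ∧ (gid R M < ⊤ ↔ gid S (S →ₗ[R] M) < ⊤) := by
  have hc : GidAux.Cot R M := fun F _ _ hF => GidAux.ext1Z_of_subsingleton (hcotorsion F hF)
  have key : gid R M = gid S (S →ₗ[R] M) := by
    unfold gid
    congr 1
    ext c
    constructor
    · rintro ⟨n, hn, ⟨w⟩⟩
      exact ⟨n, hn, GidAux.GLE.witness n _
        ((GidAux.gle_iff S n M hc).1 (GidAux.GLE.of_witness n _ ⟨w⟩))⟩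
    · rintro ⟨n, hn, ⟨w⟩⟩
      exact ⟨n, hn, GidAux.GLE.witness n _
        ((GidAux.gle_iff S n M hc).2 (GidAux.GLE.of_witness n _ ⟨w⟩))⟩
  exact ⟨key, by rw [key]⟩
end
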